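/- arXiv:2202.00281 — 7 statements merged into one kernel-verified Lean document; each statement's English description precedes it below -/
import Mathlib

section
/- Let b : ℝ → ℝ be a smooth, nonnegative, integrable and square-integrable function. Then there exists a unique W^{2,2} solution ρ of the Kazdan–Warner equation ρ'' = 1 − e^{−ρ} − b on ℝ, and this unique solution satisfies ρ(s) ≥ 0 for every s ∈ ℝ. -/
open MeasureTheory Real

/-- `ρ` is a `W^{2,2}` solution of the Kazdan–Warner equation `ρ'' = 1 - e^{-ρ} - b`:
`ρ` is twice continuously differentiable, `ρ`, `ρ'`, `ρ''` are square-integrable on `ℝ`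
with respect to Lebesgue measure, and the ODE holds everywhere. -/
def IsW22SolutionKW (b ρ : ℝ → ℝ) : Prop :=
  ContDiff ℝ 2 ρ ∧
  MeasureTheory.Integrable (fun s => (ρ s) ^ 2) ∧
  MeasureTheory.Integrable (fun s => (deriv ρ s) ^ 2) ∧
  MeasureTheory.Integrable (fun s => (deriv (deriv ρ) s) ^ 2) ∧
  ∀ s : ℝ, deriv (deriv ρ) s = 1 - Real.exp (-ρ s) - b s

/-!
A maximum principle on the whole line compares bounded sub- and supersolutions of
`u'' = φ(u) - b` for increasing `φ`; on a bounded range of values this applies to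
`φ x = 1 - e^{-x}`. As a `W^{2,2}` function is bounded, comparing two solutions with each other
gives uniqueness, and comparing a solution with `0` gives nonnegativity.

For existence, `1 - e^{-x}` is modified outside `[-R, R]` so that it becomes a Lipschitz
perturbation of a linear map, and the modified equation is solved by a contraction. The functions
`±w`, where `w` is the bounded solution of `w'' = ε² w - |b|` for small `ε`, are barriers for both
equations, so for `R ≥ sup |w|` the modification is invisible to the solution. Integrating
`(u u')' = u'² + u (φ(u) - b)` shows that this solution is in `W^{2,2}`.
-/

open Set Filter Topology
open scoped NNReal BoundedContinuousFunction

section Calculus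

variable {f g : ℝ → ℝ}

theorem deriv_deriv_sub (hf : ContDiff ℝ 2 f) (hg : ContDiff ℝ 2 g) (s : ℝ) :
    deriv (deriv fun t => f t - g t) s = deriv (deriv f) s - deriv (deriv g) s := by
  have hderiv : (deriv fun t => f t - g t) = fun t => deriv f t - deriv g t :=
    funext fun t =>
      deriv_fun_sub (hf.differentiable two_ne_zero t) (hg.differentiable two_ne_zero t)
  rw [hderiv, deriv_fun_sub (hf.differentiable_deriv_two s) (hg.differentiable_deriv_two s)]

theorem contDiff_two_of_hasDerivAt {f' f'' : ℝ → ℝ} (hf : ∀ s, HasDerivAt f (f' s) s)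
    (hf' : ∀ s, HasDerivAt f' (f'' s) s) (hf'' : Continuous f'') : ContDiff ℝ 2 f := by
  have hderiv : deriv f = f' := funext fun s => (hf s).deriv
  have hderiv' : deriv f' = f'' := funext fun s => (hf' s).deriv
  rw [← one_add_one_eq_two, contDiff_succ_iff_deriv, hderiv, contDiff_one_iff_deriv, hderiv']
  exact ⟨fun s => (hf s).differentiableAt, by simp, fun s => (hf' s).differentiableAt, hf''⟩

theorem deriv_deriv_nonpos_of_isLocalMax {x : ℝ} (hf : ContinuousAt f x) (hmax : IsLocalMax f x) :
    deriv (deriv f) x ≤ 0 := by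
  by_contra! hpos
  have hmin : IsLocalMin f x := isLocalMin_of_deriv_deriv_pos hpos hmax.deriv_eq_zero hf
  have hconst : f =ᶠ[𝓝 x] fun _ => f x := by
    filter_upwards [hmax, hmin] with t ht_le hle_t using le_antisymm ht_le hle_t
  have hzero : deriv (deriv f) x = 0 := by simpa using hconst.deriv.deriv_eq
  exact hpos.ne' hzero

theorem exists_forall_sub_mul_sq_le {C δ : ℝ} (hf : Continuous f) (hC : ∀ s, f s ≤ C)
    (hδ : 0 < δ) : ∃ x, ∀ s, f s - δ * s ^ 2 ≤ f x - δ * x ^ 2 := by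
  have hcont : Continuous fun s => f s - δ * s ^ 2 := by fun_prop
  have hsq : Tendsto (fun s : ℝ => s ^ 2) (cocompact ℝ) atTop := by
    simpa only [Function.comp_def, norm_eq_abs, sq_abs] using
      (tendsto_pow_atTop (α := ℝ) two_ne_zero).comp (tendsto_norm_cocompact_atTop (E := ℝ))
  have hlim : Tendsto (fun s => C + -(δ * s ^ 2)) (cocompact ℝ) atBot :=
    tendsto_atBot_add_const_left _ _ (tendsto_neg_atTop_atBot.comp (hsq.const_mul_atTop hδ))
  exact hcont.exists_forall_ge (tendsto_atBot_mono (fun s => by linarith [hC s]) hlim)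

-- Since `f` need not attain its supremum, argue at a maximum of `f s - δ s²` and let `δ → 0`.
theorem nonpos_of_mul_le_deriv_deriv {c C : ℝ} (hc : 0 < c) (hf : ContDiff ℝ 2 f)
    (hC : ∀ s, f s ≤ C) (h : ∀ s, 0 < f s → c * f s ≤ deriv (deriv f) s) (s₀ : ℝ) :
    f s₀ ≤ 0 := by
  by_contra! hs₀
  obtain ⟨δ, hδ, hδs₀⟩ : ∃ δ > 0, δ * (2 + c * s₀ ^ 2) < c * f s₀ := by
    refine ⟨c * f s₀ / (2 * (2 + c * s₀ ^ 2)), by positivity, ?_⟩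
    have : 0 < c * f s₀ := by positivity
    field_simp
    linarith
  obtain ⟨x, hx⟩ := exists_forall_sub_mul_sq_le hf.continuous hC hδ
  have hfx : f s₀ - δ * s₀ ^ 2 ≤ f x := by nlinarith [hx s₀, sq_nonneg x]
  have hfx_pos : 0 < f x := by nlinarith
  have hx_deriv : deriv (deriv f) x ≤ 2 * δ := by
    have hmax := deriv_deriv_nonpos_of_isLocalMax (f := fun s => f s - δ * s ^ 2)
      (hf.continuous.sub (by fun_prop)).continuousAt (Eventually.of_forall hx)
    have hsq : deriv (deriv fun s : ℝ => δ * s ^ 2) x = 2 * δ := by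
      simp [mul_comm]
    rw [deriv_deriv_sub hf (by fun_prop), hsq] at hmax
    linarith
  nlinarith [h x hfx_pos]

theorem integrable_deriv_of_neg_le {q : ℝ → ℝ} {D : ℝ} (hf : ContDiff ℝ 1 f)
    (hD : ∀ s, |f s| ≤ D) (hq : Integrable q) (h : ∀ s, -q s ≤ deriv f s) :
    Integrable (deriv f) := by
  have hf' : Continuous (deriv f) := hf.continuous_deriv_one
  refine integrable_of_intervalIntegral_norm_bounded (l := atTop) (a := Neg.neg) (b := id)
    (2 * D + ∫ s, 2 * |q s|) (fun _ => hf'.integrableOn_Ioc) tendsto_neg_atTop_atBot tendsto_id ?_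
  filter_upwards [eventually_ge_atTop 0] with r hr
  have hle : -r ≤ r := by linarith
  have hq' : Integrable fun s => 2 * |q s| := hq.abs.const_mul 2
  calc ∫ s in -r..r, ‖deriv f s‖ ≤ ∫ s in -r..r, (deriv f s + 2 * |q s|) := by
        refine intervalIntegral.integral_mono_on hle (hf'.norm.intervalIntegrable _ _)
          ((hf'.intervalIntegrable _ _).add hq'.intervalIntegrable) fun s _ => ?_
        exact abs_le.2 ⟨by linarith [h s, le_abs_self (q s)], by linarith [abs_nonneg (q s)]⟩
    _ = (f r - f (-r)) + ∫ s in -r..r, 2 * |q s| := by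
        rw [intervalIntegral.integral_add (hf'.intervalIntegrable _ _) hq'.intervalIntegrable,
          intervalIntegral.integral_deriv_eq_sub (fun s _ => hf.differentiable one_ne_zero s)
            (hf'.intervalIntegrable _ _)]
    _ ≤ 2 * D + ∫ s, 2 * |q s| := by
        have hqle : ∫ s in -r..r, 2 * |q s| ≤ ∫ s, 2 * |q s| := by
          rw [intervalIntegral.integral_of_le hle]
          exact setIntegral_le_integral hq' (Eventually.of_forall fun s => by positivity)
        linarith [abs_le.1 (hD r), abs_le.1 (hD (-r))]

theorem norm_le_of_integrable_deriv {E : Type*} [NormedAddCommGroup E] [NormedSpace ℝ E]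
    [CompleteSpace E] {F : ℝ → E} (hF : Differentiable ℝ F) (hF' : Integrable (deriv F)) (s : ℝ) :
    ‖F s‖ ≤ ‖F 0‖ + ∫ t, ‖deriv F t‖ := by
  have hFTC : ∫ t in (0 : ℝ)..s, deriv F t = F s - F 0 :=
    intervalIntegral.integral_deriv_eq_sub (fun t _ => hF t) hF'.intervalIntegrable
  calc ‖F s‖ = ‖F 0 + ∫ t in (0 : ℝ)..s, deriv F t‖ := by rw [hFTC, add_sub_cancel]
    _ ≤ ‖F 0‖ + ‖∫ t in (0 : ℝ)..s, deriv F t‖ := norm_add_le _ _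
    _ ≤ ‖F 0‖ + ∫ t, ‖deriv F t‖ := by
        gcongr
        exact intervalIntegral.norm_integral_le_integral_norm_uIoc.trans
          (setIntegral_le_integral hF'.norm (Eventually.of_forall fun _ => norm_nonneg _))

theorem hasDerivAt_integral_Iic {E : Type*} [NormedAddCommGroup E] [NormedSpace ℝ E]
    [CompleteSpace E] {F : ℝ → E} (hF : Continuous F) (hi : ∀ s, IntegrableOn F (Iic s)) (s : ℝ) :
    HasDerivAt (fun x => ∫ t in Iic x, F t) (F s) s := by
  have hsplit : (fun x => ∫ t in Iic x, F t) =
      fun x => (∫ t in Iic 0, F t) + ∫ t in (0 : ℝ)..x, F t := by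
    ext x
    rw [← intervalIntegral.integral_Iic_sub_Iic (hi 0) (hi x), add_sub_cancel]
  rw [hsplit]
  exact (hF.integral_hasStrictDerivAt 0 s).hasDerivAt.const_add _

end Calculus

/-- `u` is a classical solution of `u'' = φ(u) - b` on `ℝ` which is bounded together with its
derivative. The Kazdan–Warner equation is the case `φ x = 1 - e^{-x}`, and `φ x = l x` gives its
linear comparison equations. -/
structure IsBoundedSolution (φ b u : ℝ → ℝ) : Prop where
  contDiff : ContDiff ℝ 2 u
  exists_abs_le : ∃ C, ∀ s, |u s| ≤ C
  exists_abs_deriv_le : ∃ C, ∀ s, |deriv u s| ≤ C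
  deriv_deriv_eq : ∀ s, deriv (deriv u) s = φ (u s) - b s

section LinearEquation

variable {h k : ℝ → ℝ} {ε C : ℝ}

theorem abs_exp_mul_mul_le (hk0 : ∀ s, 0 ≤ k s) (hhk : ∀ s, |h s| ≤ C + k s) (hε : 0 < ε)
    {s t : ℝ} (hts : t ≤ s) :
    |exp (ε * t) * h t| ≤ C * exp (ε * t) + exp (ε * s) * k t := by
  calc |exp (ε * t) * h t| = exp (ε * t) * |h t| := by rw [abs_mul, abs_exp]
    _ ≤ exp (ε * t) * (C + k t) := by gcongr; exact hhk t
    _ = C * exp (ε * t) + exp (ε * t) * k t := by ring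
    _ ≤ C * exp (ε * t) + exp (ε * s) * k t := by gcongr; exact hk0 t

theorem integrableOn_exp_mul_mul_Iic (hε : 0 < ε) (hh : Continuous h) (hk : Integrable k)
    (hk0 : ∀ s, 0 ≤ k s) (hhk : ∀ s, |h s| ≤ C + k s) (s : ℝ) :
    IntegrableOn (fun t => exp (ε * t) * h t) (Iic s) := by
  have hcont : Continuous fun t => exp (ε * t) * h t := by fun_prop
  refine (((integrableOn_exp_mul_Iic hε s).const_mul C).add
    (hk.const_mul (exp (ε * s))).integrableOn).mono' hcont.aestronglyMeasurable ?_
  filter_upwards [ae_restrict_mem measurableSet_Iic] with t ht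
  exact abs_exp_mul_mul_le hk0 hhk hε ht

theorem abs_integral_exp_mul_mul_Iic_le (hε : 0 < ε) (hk : Integrable k)
    (hk0 : ∀ s, 0 ≤ k s) (hhk : ∀ s, |h s| ≤ C + k s) (s : ℝ) :
    |∫ t in Iic s, exp (ε * t) * h t| ≤ exp (ε * s) * (C / ε + ∫ t, k t) := by
  have hexp : IntegrableOn (fun t => C * exp (ε * t)) (Iic s) :=
    (integrableOn_exp_mul_Iic hε s).const_mul C
  have hk' : IntegrableOn (fun t => exp (ε * s) * k t) (Iic s) :=
    (hk.const_mul _).integrableOn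
  calc |∫ t in Iic s, exp (ε * t) * h t|
      ≤ ∫ t in Iic s, (C * exp (ε * t) + exp (ε * s) * k t) := by
        rw [← norm_eq_abs]
        refine norm_integral_le_of_norm_le (hexp.add hk') ?_
        filter_upwards [ae_restrict_mem measurableSet_Iic] with t ht
        exact abs_exp_mul_mul_le hk0 hhk hε ht
    _ = C * (exp (ε * s) / ε) + exp (ε * s) * ∫ t in Iic s, k t := by
        rw [integral_add hexp hk', integral_const_mul, integral_const_mul, integral_exp_mul_Iic hε]
    _ ≤ C * (exp (ε * s) / ε) + exp (ε * s) * ∫ t, k t := by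
        gcongr _ + _ * ?_
        exact setIntegral_le_integral hk (Eventually.of_forall hk0)
    _ = exp (ε * s) * (C / ε + ∫ t, k t) := by ring

theorem exists_bounded_hasDerivAt_sub_mul (hε : 0 < ε) (hh : Continuous h) (hk : Integrable k)
    (hk0 : ∀ s, 0 ≤ k s) (hhk : ∀ s, |h s| ≤ C + k s) :
    ∃ v : ℝ → ℝ, (∀ s, HasDerivAt v (h s - ε * v s) s) ∧ ∀ s, |v s| ≤ C / ε + ∫ t, k t := by
  have hcancel (s : ℝ) : exp (-(ε * s)) * exp (ε * s) = 1 := by rw [← exp_add]; simp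
  refine ⟨fun s => exp (-(ε * s)) * ∫ t in Iic s, exp (ε * t) * h t, fun s => ?_, fun s => ?_⟩
  · have hint : HasDerivAt (fun s => ∫ t in Iic s, exp (ε * t) * h t) (exp (ε * s) * h s) s :=
      hasDerivAt_integral_Iic (by fun_prop) (integrableOn_exp_mul_mul_Iic hε hh hk hk0 hhk) s
    have hexp : HasDerivAt (fun s => exp (-(ε * s))) (exp (-(ε * s)) * -(ε * 1)) s :=
      ((hasDerivAt_id s).const_mul ε).neg.exp
    refine (hexp.fun_mul hint).congr_deriv ?_
    linear_combination h s * hcancel s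
  · calc |exp (-(ε * s)) * ∫ t in Iic s, exp (ε * t) * h t|
        = exp (-(ε * s)) * |∫ t in Iic s, exp (ε * t) * h t| := by rw [abs_mul, abs_exp]
      _ ≤ exp (-(ε * s)) * (exp (ε * s) * (C / ε + ∫ t, k t)) := by
          gcongr
          exact abs_integral_exp_mul_mul_Iic_le hε hk hk0 hhk s
      _ = C / ε + ∫ t, k t := by rw [← mul_assoc, hcancel, one_mul]

-- `u'' - ε² u = (d/ds - ε)(d/ds + ε) u`, so `u` is obtained from bounded solutions of the two
-- first-order equations, one the reflection of the other.
theorem exists_isBoundedSolution_sq_mul (hε : 0 < ε) (hh : Continuous h) (hk : Integrable k)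
    (hk0 : ∀ s, 0 ≤ k s) (hhk : ∀ s, |h s| ≤ C + k s) :
    ∃ u, IsBoundedSolution (fun x => ε ^ 2 * x) h u ∧
      ∀ s, |u s| ≤ (C / ε + ∫ t, k t) / ε := by
  obtain ⟨v, hv, hvC⟩ := exists_bounded_hasDerivAt_sub_mul hε hh hk hk0 hhk
  obtain ⟨w, hw, hwC⟩ := exists_bounded_hasDerivAt_sub_mul hε (hh.comp continuous_neg) hk.comp_neg
    (fun s => hk0 (-s)) (fun s => hhk (-s))
  rw [integral_neg_eq_self] at hwC
  have hw_neg (s : ℝ) : HasDerivAt (fun s => w (-s)) (ε * w (-s) - h s) s := by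
    refine ((hw (-s)).scomp s (hasDerivAt_neg s)).congr_deriv ?_
    simp only [Function.comp_apply, neg_neg, smul_eq_mul]
    ring
  have hu (s : ℝ) : HasDerivAt (fun s => (v s + w (-s)) / (2 * ε)) ((w (-s) - v s) / 2) s := by
    refine (((hv s).fun_add (hw_neg s)).div_const (2 * ε)).congr_deriv ?_
    field_simp
    ring
  have hu' (s : ℝ) : HasDerivAt (fun s => (w (-s) - v s) / 2)
      (ε ^ 2 * ((v s + w (-s)) / (2 * ε)) - h s) s := by
    refine (((hw_neg s).fun_sub (hv s)).div_const 2).congr_deriv ?_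
    field_simp
    ring
  have hderiv : (deriv fun s => (v s + w (-s)) / (2 * ε)) = fun s => (w (-s) - v s) / 2 :=
    funext fun s => (hu s).deriv
  have hu_cont : Continuous fun s => (v s + w (-s)) / (2 * ε) :=
    continuous_iff_continuousAt.2 fun s => (hu s).continuousAt
  have hu_le (s : ℝ) : |(v s + w (-s)) / (2 * ε)| ≤ (C / ε + ∫ t, k t) / ε := by
    rw [abs_div, abs_of_pos (by positivity : 0 < 2 * ε), div_le_div_iff₀ (by positivity) hε]
    nlinarith [abs_add_le (v s) (w (-s)), hvC s, hwC (-s)]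
  refine ⟨_, ⟨contDiff_two_of_hasDerivAt hu hu' (by fun_prop), ⟨_, hu_le⟩,
    ⟨C / ε + ∫ t, k t, fun s => ?_⟩, fun s => by rw [hderiv, (hu' s).deriv]⟩, hu_le⟩
  rw [hderiv, abs_div, abs_two, div_le_iff₀ two_pos]
  linarith [abs_sub (w (-s)) (v s), hvC s, hwC (-s)]

end LinearEquation

/-- `φ` is a perturbation of the linear map `x ↦ l x` by a function with Lipschitz constant `K < l`;
equivalently, the difference quotients of `φ` lie in a compact subset of `(0, ∞)`. The constants
`l` and `K` are those which make the fixed point problem for `u'' = φ(u) - b` a contraction. -/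
def IsBilipschitzIncreasing (φ : ℝ → ℝ) : Prop :=
  ∃ l K : ℝ≥0, K < l ∧ LipschitzWith K fun x => l * x - φ x

section Semilinear

variable {φ b u w : ℝ → ℝ}

namespace IsBilipschitzIncreasing

theorem exists_mul_sub_le (hφ : IsBilipschitzIncreasing φ) :
    ∃ c > 0, ∀ x y, y ≤ x → c * (x - y) ≤ φ x - φ y := by
  obtain ⟨l, K, hKl, hLip⟩ := hφ
  refine ⟨l - K, sub_pos.2 hKl, fun x y hyx => ?_⟩
  have hdist := (le_abs_self _).trans (hLip.dist_le_mul x y)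
  rw [Real.dist_eq, abs_of_nonneg (sub_nonneg.2 hyx)] at hdist
  linarith

theorem exists_abs_le_mul_abs (hφ : IsBilipschitzIncreasing φ) (hφ0 : φ 0 = 0) :
    ∃ L, ∀ x, |φ x| ≤ L * |x| := by
  obtain ⟨l, K, -, hLip⟩ := hφ
  refine ⟨l + K, fun x => ?_⟩
  have hdist : |l * x - φ x| ≤ K * |x| := by
    simpa [Real.dist_eq, hφ0] using hLip.dist_le_mul x 0
  calc |φ x| = |l * x - (l * x - φ x)| := by rw [sub_sub_cancel]
    _ ≤ |l * x| + |l * x - φ x| := abs_sub _ _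
    _ ≤ (l + K) * |x| := by rw [abs_mul, NNReal.abs_eq, add_mul]; gcongr

theorem exists_mul_sq_le (hφ : IsBilipschitzIncreasing φ) (hφ0 : φ 0 = 0) :
    ∃ c > 0, ∀ x, c * x ^ 2 ≤ x * φ x := by
  obtain ⟨c, hc, hmono⟩ := hφ.exists_mul_sub_le
  refine ⟨c, hc, fun x => ?_⟩
  rcases le_total 0 x with hx | hx
  · nlinarith [hmono x 0 hx]
  · nlinarith [hmono 0 x hx]

end IsBilipschitzIncreasing

theorem le_of_subsolution_of_supersolution {c C : ℝ} (hc : 0 < c)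
    (hφ : ∀ x y, y ≤ x → c * (x - y) ≤ φ x - φ y) (hu : ContDiff ℝ 2 u) (hw : ContDiff ℝ 2 w)
    (hC : ∀ s, u s - w s ≤ C) (hsub : ∀ s, φ (u s) - b s ≤ deriv (deriv u) s)
    (hsuper : ∀ s, deriv (deriv w) s ≤ φ (w s) - b s) (s : ℝ) : u s ≤ w s := by
  refine sub_nonpos.1 (nonpos_of_mul_le_deriv_deriv hc (hu.sub hw) hC (fun t ht => ?_) s)
  rw [deriv_deriv_sub hu hw]
  linarith [hφ _ _ (sub_pos.1 ht).le, hsub t, hsuper t]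

namespace IsBoundedSolution

theorem congr {ψ : ℝ → ℝ} (hu : IsBoundedSolution φ b u) (hφψ : ∀ s, φ (u s) = ψ (u s)) :
    IsBoundedSolution ψ b u :=
  ⟨hu.contDiff, hu.exists_abs_le, hu.exists_abs_deriv_le, fun s => hφψ s ▸ hu.deriv_deriv_eq s⟩

theorem le_add_div_of_linear {f g : ℝ → ℝ} {l D : ℝ} (hl : 0 < l)
    (hu : IsBoundedSolution (fun x => l * x) f u) (hw : IsBoundedSolution (fun x => l * x) g w)
    (hD : ∀ s, |f s - g s| ≤ D) (s : ℝ) : u s ≤ w s + D / l := by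
  obtain ⟨A, hA⟩ := hu.exists_abs_le
  obtain ⟨B, hB⟩ := hw.exists_abs_le
  refine le_of_subsolution_of_supersolution (w := fun t => w t + D / l) (C := A + B - D / l) hl
    (fun x y _ => (mul_sub l x y).le) hu.contDiff (hw.contDiff.add contDiff_const)
    (fun t => by linarith [abs_le.1 (hA t), abs_le.1 (hB t)]) (fun t => (hu.deriv_deriv_eq t).ge)
    (fun t => ?_) s
  have hDl : l * (D / l) = D := mul_div_cancel₀ D hl.ne'
  rw [deriv_add_const', hw.deriv_deriv_eq]
  linarith [abs_le.1 (hD t)]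

theorem abs_sub_le_div_of_linear {f g : ℝ → ℝ} {l D : ℝ} (hl : 0 < l)
    (hu : IsBoundedSolution (fun x => l * x) f u) (hw : IsBoundedSolution (fun x => l * x) g w)
    (hD : ∀ s, |f s - g s| ≤ D) (s : ℝ) : |u s - w s| ≤ D / l := by
  refine abs_sub_le_iff.2 ⟨?_, ?_⟩
  · linarith [hu.le_add_div_of_linear hl hw hD s]
  · linarith [hw.le_add_div_of_linear hl hu (fun t => abs_sub_comm (f t) (g t) ▸ hD t) s]

end IsBoundedSolution

-- A solution is a fixed point of `f ↦ u`, where `u'' = l u - (ψ(f) + b)` and `ψ x = l x - φ x`;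
-- inverting the linear part costs `1 / l`, so this map contracts by `K / l < 1`.
theorem IsBilipschitzIncreasing.exists_isBoundedSolution {k : ℝ → ℝ} {C : ℝ}
    (hφ : IsBilipschitzIncreasing φ) (hb : Continuous b) (hk : Integrable k)
    (hk0 : ∀ s, 0 ≤ k s) (hbk : ∀ s, |b s| ≤ C + k s) : ∃ u, IsBoundedSolution φ b u := by
  obtain ⟨l, K, hKl, hLip⟩ := hφ
  have hl : (0 : ℝ) < l := K.coe_nonneg.trans_lt hKl
  set ψ : ℝ → ℝ := fun x => l * x - φ x with hψ
  have hsolve (f : ℝ →ᵇ ℝ) :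
      ∃ u : ℝ →ᵇ ℝ, IsBoundedSolution (fun x => l * x) (fun s => ψ (f s) + b s) u := by
    have hψf_le (s : ℝ) : |ψ (f s)| ≤ ‖f.comp ψ hLip‖ := (f.comp ψ hLip).norm_coe_le_norm s
    have hψf_add_le (s : ℝ) : |ψ (f s) + b s| ≤ (‖f.comp ψ hLip‖ + C) + k s := by
      linarith [abs_add_le (ψ (f s)) (b s), hψf_le s, hbk s]
    obtain ⟨u, hu, -⟩ := exists_isBoundedSolution_sq_mul (sqrt_pos.2 hl)
      ((hLip.continuous.comp f.continuous).add hb) hk hk0 hψf_add_le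
    rw [sq_sqrt hl.le] at hu
    obtain ⟨D, hD⟩ := hu.exists_abs_le
    exact ⟨.ofNormedAddCommGroup u hu.contDiff.continuous D hD, hu⟩
  choose T hT using hsolve
  have hcontr : ContractingWith (K / l) T := by
    refine ⟨(div_lt_one₀ hl).2 hKl, LipschitzWith.of_dist_le_mul fun f g => ?_⟩
    have hψ_dist (s : ℝ) : |(ψ (f s) + b s) - (ψ (g s) + b s)| ≤ K * dist f g := by
      rw [add_sub_add_right_eq_sub]
      exact (hLip.dist_le_mul _ _).trans (by gcongr; exact f.dist_coe_le_dist s)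
    refine (BoundedContinuousFunction.dist_le (by positivity)).2 fun s => ?_
    refine ((hT f).abs_sub_le_div_of_linear hl (hT g) hψ_dist s).trans_eq ?_
    push_cast
    ring
  obtain ⟨f, hf⟩ : ∃ f, T f = f := ⟨_, hcontr.fixedPoint_isFixedPt⟩
  have hu := hT f
  rw [hf] at hu
  refine ⟨f, hu.contDiff, hu.exists_abs_le, hu.exists_abs_deriv_le, fun s => ?_⟩
  rw [hu.deriv_deriv_eq s]
  simp only [hψ]
  ring

namespace IsBoundedSolution

theorem integrable_sq_and_deriv_sq {c : ℝ} (hu : IsBoundedSolution φ b u) (hc : 0 < c)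
    (hφ : ∀ s, c * u s ^ 2 ≤ u s * φ (u s)) (hb : Integrable fun s => b s ^ 2) :
    Integrable (fun s => u s ^ 2) ∧ Integrable fun s => deriv u s ^ 2 := by
  obtain ⟨A, hA⟩ := hu.exists_abs_le
  obtain ⟨B, hB⟩ := hu.exists_abs_deriv_le
  have huC := hu.contDiff
  have hq : Integrable fun s => b s ^ 2 / (2 * c) := hb.div_const _
  have hderiv (s : ℝ) : deriv (fun t => u t * deriv u t) s =
      deriv u s ^ 2 + u s * (φ (u s) - b s) := by
    rw [deriv_fun_mul (huC.differentiable two_ne_zero s) (huC.differentiable_deriv_two s),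
      hu.deriv_deriv_eq, sq]
  have hcoercive (s : ℝ) : deriv u s ^ 2 + c / 2 * u s ^ 2 ≤
      deriv (fun t => u t * deriv u t) s + b s ^ 2 / (2 * c) := by
    have hyoung : u s * b s ≤ c / 2 * u s ^ 2 + b s ^ 2 / (2 * c) := by
      have : 0 ≤ (c * u s - b s) ^ 2 / (2 * c) := by positivity
      have : (c * u s - b s) ^ 2 / (2 * c) =
        c / 2 * u s ^ 2 + b s ^ 2 / (2 * c) - u s * b s := by field_simp; ring
      linarith
    linarith [hφ s, hderiv s]
  have hint : Integrable fun s => deriv (fun t => u t * deriv u t) s + b s ^ 2 / (2 * c) := by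
    refine (integrable_deriv_of_neg_le (D := A * B)
      ((huC.of_le one_le_two).mul huC.deriv') (fun s => ?_) hq fun s => ?_).add hq
    · rw [abs_mul]
      exact mul_le_mul (hA s) (hB s) (abs_nonneg _) ((abs_nonneg _).trans (hA s))
    · have : 0 ≤ deriv u s ^ 2 + c / 2 * u s ^ 2 := by positivity
      linarith [hcoercive s]
  constructor
  · refine (hint.const_mul (2 / c)).mono' (huC.continuous.pow 2).aestronglyMeasurable
      (Eventually.of_forall fun s => ?_)
    rw [norm_of_nonneg (sq_nonneg _), ← div_le_iff₀' (by positivity), div_div_eq_mul_div]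
    linarith [hcoercive s, sq_nonneg (deriv u s)]
  · refine hint.mono' (by fun_prop) (Eventually.of_forall fun s => ?_)
    rw [norm_of_nonneg (sq_nonneg _)]
    have : 0 ≤ c / 2 * u s ^ 2 := by positivity
    linarith [hcoercive s]

theorem integrable_deriv_deriv_sq {L : ℝ} (hu : IsBoundedSolution φ b u)
    (hφ : ∀ s, |φ (u s)| ≤ L * |u s|) (hu2 : Integrable fun s => u s ^ 2)
    (hb : Integrable fun s => b s ^ 2) : Integrable fun s => deriv (deriv u) s ^ 2 := by
  have huC := hu.contDiff
  refine ((hu2.const_mul (2 * L ^ 2)).add (hb.const_mul 2)).mono' (by fun_prop)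
    (Eventually.of_forall fun s => ?_)
  have hφ_sq : φ (u s) ^ 2 ≤ L ^ 2 * u s ^ 2 := by
    simpa only [sq_abs, mul_pow] using pow_le_pow_left₀ (abs_nonneg _) (hφ s) 2
  rw [norm_of_nonneg (sq_nonneg _), hu.deriv_deriv_eq]
  simp only [Pi.add_apply]
  nlinarith [sq_nonneg (φ (u s) + b s)]

end IsBoundedSolution

end Semilinear

section KazdanWarner

variable {b u w : ℝ → ℝ}

theorem exists_isBilipschitzIncreasing_eqOn (R : ℝ) :
    ∃ φ, IsBilipschitzIncreasing φ ∧ ∀ x, |x| ≤ R → φ x = 1 - exp (-x) := by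
  set K : ℝ≥0 := (exp R - exp (-R)).toNNReal
  set l : ℝ≥0 := (exp R).toNNReal
  have hl_coe : (l : ℝ) = exp R := Real.coe_toNNReal _ (exp_pos R).le
  have hderiv (x : ℝ) : HasDerivAt (fun x => l * x - (1 - exp (-x))) (l - exp (-x)) x := by
    refine (((hasDerivAt_id x).const_mul (l : ℝ)).sub
      ((hasDerivAt_neg x).exp.const_sub 1)).congr_deriv ?_
    ring
  have hderiv_le (x : ℝ) (hx : x ∈ Icc (-R) R) : ‖(l : ℝ) - exp (-x)‖₊ ≤ K := by
    have h_le : exp (-R) ≤ exp (-x) := exp_le_exp.2 (neg_le_neg hx.2)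
    have h_ge : exp (-x) ≤ exp R := exp_le_exp.2 (neg_le.1 hx.1)
    rw [← NNReal.coe_le_coe, coe_nnnorm, hl_coe, norm_of_nonneg (by linarith)]
    exact (by linarith : exp R - exp (-x) ≤ exp R - exp (-R)).trans (Real.le_coe_toNNReal _)
  obtain ⟨ψ, hψ, hψ_eq⟩ := ((convex_Icc (-R) R).lipschitzOnWith_of_nnnorm_hasDerivWithin_le
    (fun x _ => (hderiv x).hasDerivWithinAt) hderiv_le).extend_real
  have hKl : K < l :=
    (Real.toNNReal_lt_toNNReal_iff (exp_pos R)).2 (sub_lt_self _ (exp_pos (-R)))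
  refine ⟨fun x => l * x - ψ x, ⟨l, K, hKl, by simpa only [sub_sub_cancel] using hψ⟩,
    fun x hx => ?_⟩
  simp only [← hψ_eq (abs_le.1 hx), sub_sub_cancel]

theorem mul_le_one_sub_exp_neg {k x : ℝ} (hx : 0 ≤ x) (hk : k * (1 + x) ≤ 1) :
    k * x ≤ 1 - exp (-x) := by
  have hexp : exp (-x) * (1 + x) ≤ 1 := by
    calc exp (-x) * (1 + x) ≤ exp (-x) * exp x := by gcongr; linarith [add_one_le_exp x]
      _ = 1 := by rw [← exp_add, neg_add_cancel, exp_zero]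
  refine le_of_mul_le_mul_right ?_ (by positivity : 0 < 1 + x)
  calc k * x * (1 + x) = x * (k * (1 + x)) := by ring
    _ ≤ x := mul_le_of_le_one_right hx hk
    _ ≤ (1 - exp (-x)) * (1 + x) := by linarith

theorem abs_le_quarter_add_sq (x : ℝ) : |x| ≤ 1 / 4 + x ^ 2 := by
  nlinarith [sq_nonneg (|x| - 1 / 2), sq_abs x]

-- The linear solution of `w'' = ε² w - |b|` works once `ε² (1 + w) ≤ 1`; its a priori bound gives
-- `ε² w ≤ 1 / 4 + ε ∫ b²`.
theorem exists_kazdanWarner_barrier (hb : Continuous b) (hb2 : Integrable fun s => b s ^ 2) :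
    ∃ w : ℝ → ℝ, ContDiff ℝ 2 w ∧ (∃ R, ∀ s, |w s| ≤ R) ∧
      (∀ s, deriv (deriv w) s ≤ 1 - exp (-w s) - |b s|) ∧
      ∀ s, 1 - exp (w s) + |b s| ≤ -deriv (deriv w) s := by
  set B := ∫ s, b s ^ 2
  have hB : 0 ≤ B := integral_nonneg fun s => sq_nonneg (b s)
  obtain ⟨ε, hε, hεB⟩ : ∃ ε > 0, ε * (1 + B) = 1 / 2 :=
    ⟨1 / (2 * (1 + B)), by positivity, by field_simp⟩
  obtain ⟨w, hw, hw_le⟩ := exists_isBoundedSolution_sq_mul (C := 1 / 4) hε hb.abs hb2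
    (fun s => sq_nonneg (b s)) (fun s => (abs_abs (b s)).trans_le (abs_le_quarter_add_sq (b s)))
  have hw_nonneg (s : ℝ) : 0 ≤ w s := by
    refine le_of_subsolution_of_supersolution (u := fun _ => 0) (b := fun s => |b s|)
      (C := (1 / 4 / ε + B) / ε) (pow_pos hε 2) (fun x y _ => (mul_sub _ x y).le) contDiff_const
      hw.contDiff (fun t => ?_) (fun t => ?_) (fun t => (hw.deriv_deriv_eq t).le) s
    · linarith [abs_le.1 (hw_le t)]
    · simp
  have hsmall (s : ℝ) : ε ^ 2 * (1 + w s) ≤ 1 := by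
    have hws : ε ^ 2 * w s ≤ 1 / 4 + ε * B := by
      have := (le_abs_self _).trans (hw_le s)
      calc ε ^ 2 * w s ≤ ε ^ 2 * ((1 / 4 / ε + B) / ε) := by gcongr
        _ = 1 / 4 + ε * B := by field_simp
    nlinarith
  refine ⟨w, hw.contDiff, hw.exists_abs_le, fun s => ?_, fun s => ?_⟩
  · linarith [hw.deriv_deriv_eq s, mul_le_one_sub_exp_neg (hw_nonneg s) (hsmall s)]
  · have hεw : ε ^ 2 * w s ≤ w s := mul_le_of_le_one_left (hw_nonneg s) (by
      nlinarith [hsmall s, mul_nonneg (sq_nonneg ε) (hw_nonneg s)])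
    linarith [hw.deriv_deriv_eq s, add_one_le_exp (w s)]

theorem exists_isBoundedSolution_kazdanWarner (hb : Continuous b)
    (hb2 : Integrable fun s => b s ^ 2) :
    ∃ u, IsBoundedSolution (fun x => 1 - exp (-x)) b u := by
  obtain ⟨w, hw, ⟨R, hR⟩, hw_super, hw_sub⟩ := exists_kazdanWarner_barrier hb hb2
  obtain ⟨φ, hφ, hφ_eq⟩ := exists_isBilipschitzIncreasing_eqOn R
  obtain ⟨c, hc, hmono⟩ := hφ.exists_mul_sub_le
  obtain ⟨u, hu⟩ := hφ.exists_isBoundedSolution (C := 1 / 4) hb hb2 (fun s => sq_nonneg (b s))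
    fun s => abs_le_quarter_add_sq (b s)
  obtain ⟨D, hD⟩ := hu.exists_abs_le
  have hu_le (s : ℝ) : u s ≤ w s := by
    refine le_of_subsolution_of_supersolution (b := b) (C := D + R) hc hmono hu.contDiff hw
      (fun t => by linarith [abs_le.1 (hD t), abs_le.1 (hR t)])
      (fun t => (hu.deriv_deriv_eq t).ge) (fun t => ?_) s
    rw [hφ_eq _ (hR t)]
    linarith [hw_super t, le_abs_self (b t)]
  have hle_u (s : ℝ) : -w s ≤ u s := by
    refine le_of_subsolution_of_supersolution (u := fun t => -w t) (b := b) (C := R + D) hc hmono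
      hw.neg hu.contDiff (fun t => by linarith [abs_le.1 (hD t), abs_le.1 (hR t)])
      (fun t => ?_) (fun t => (hu.deriv_deriv_eq t).le) s
    rw [hφ_eq _ ((abs_neg (w t)).trans_le (hR t)), neg_neg]
    simp only [deriv.fun_neg']
    linarith [hw_sub t, neg_abs_le (b t)]
  refine ⟨u, hu.congr fun s => hφ_eq _ ?_⟩
  exact (abs_le.2 ⟨hle_u s, hu_le s⟩).trans ((le_abs_self _).trans (hR s))

theorem IsBoundedSolution.isW22SolutionKW (hu : IsBoundedSolution (fun x => 1 - exp (-x)) b u)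
    (hb2 : Integrable fun s => b s ^ 2) : IsW22SolutionKW b u := by
  obtain ⟨R, hR⟩ := hu.exists_abs_le
  obtain ⟨φ, hφ, hφ_eq⟩ := exists_isBilipschitzIncreasing_eqOn R
  have hφ0 : φ 0 = 0 := by
    rw [hφ_eq 0 (abs_zero.trans_le ((abs_nonneg _).trans (hR 0))), neg_zero, exp_zero, sub_self]
  obtain ⟨c, hc, hcoercive⟩ := hφ.exists_mul_sq_le hφ0
  obtain ⟨L, hL⟩ := hφ.exists_abs_le_mul_abs hφ0
  have huφ : IsBoundedSolution φ b u := hu.congr fun s => (hφ_eq _ (hR s)).symm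
  obtain ⟨hu2, hu2'⟩ := huφ.integrable_sq_and_deriv_sq hc (fun s => hcoercive (u s)) hb2
  exact ⟨hu.contDiff, hu2, hu2', huφ.integrable_deriv_deriv_sq (fun s => hL (u s)) hu2 hb2,
    hu.deriv_deriv_eq⟩

theorem le_of_kazdanWarner_subsolution_of_supersolution (hu : ContDiff ℝ 2 u)
    (hw : ContDiff ℝ 2 w) (hu_bdd : ∃ C, ∀ s, |u s| ≤ C) (hw_bdd : ∃ C, ∀ s, |w s| ≤ C)
    (hsub : ∀ s, 1 - exp (-u s) - b s ≤ deriv (deriv u) s)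
    (hsuper : ∀ s, deriv (deriv w) s ≤ 1 - exp (-w s) - b s) (s : ℝ) : u s ≤ w s := by
  obtain ⟨A, hA⟩ := hu_bdd
  obtain ⟨B, hB⟩ := hw_bdd
  obtain ⟨φ, hφ, hφ_eq⟩ := exists_isBilipschitzIncreasing_eqOn (max A B)
  obtain ⟨c, hc, hmono⟩ := hφ.exists_mul_sub_le
  refine le_of_subsolution_of_supersolution (b := b) (C := A + B) hc hmono hu hw
    (fun t => by linarith [abs_le.1 (hA t), abs_le.1 (hB t)]) (fun t => ?_) (fun t => ?_) s
  · rw [hφ_eq _ ((hA t).trans (le_max_left A B))]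
    exact hsub t
  · rw [hφ_eq _ ((hB t).trans (le_max_right A B))]
    exact hsuper t

namespace IsW22SolutionKW

variable {ρ σ : ℝ → ℝ}

theorem exists_abs_le (hρ : IsW22SolutionKW b ρ) : ∃ C, ∀ s, |ρ s| ≤ C := by
  obtain ⟨hρ_C2, hρ_sq, hρ'_sq, -, -⟩ := hρ
  have hdiff : Differentiable ℝ ρ := hρ_C2.differentiable two_ne_zero
  have hderiv : deriv (fun s => ρ s ^ 2) = fun s => 2 * (ρ s * deriv ρ s) := by
    ext s
    rw [deriv_fun_pow (hdiff s)]
    ring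
  have hint : Integrable (deriv fun s => ρ s ^ 2) := by
    rw [hderiv]
    exact (((memLp_two_iff_integrable_sq hρ_C2.continuous.aestronglyMeasurable).2
      hρ_sq).integrable_mul ((memLp_two_iff_integrable_sq (by fun_prop)).2 hρ'_sq)).const_mul 2
  refine ⟨√(‖ρ 0 ^ 2‖ + ∫ t, ‖deriv (fun s => ρ s ^ 2) t‖), fun s => abs_le_sqrt ?_⟩
  exact (le_abs_self _).trans (norm_le_of_integrable_deriv (hdiff.pow 2) hint s)

theorem le (hρ : IsW22SolutionKW b ρ) (hσ : IsW22SolutionKW b σ) (s : ℝ) : ρ s ≤ σ s :=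
  le_of_kazdanWarner_subsolution_of_supersolution hρ.1 hσ.1 hρ.exists_abs_le hσ.exists_abs_le
    (fun t => (hρ.2.2.2.2 t).ge) (fun t => (hσ.2.2.2.2 t).le) s

theorem nonneg (hρ : IsW22SolutionKW b ρ) (hb : ∀ s, 0 ≤ b s) (s : ℝ) : 0 ≤ ρ s :=
  le_of_kazdanWarner_subsolution_of_supersolution (u := fun _ => 0) contDiff_const hρ.1
    ⟨0, by simp⟩ hρ.exists_abs_le (by simpa using hb) (fun t => (hρ.2.2.2.2 t).le) s

end IsW22SolutionKW

end KazdanWarner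

theorem kazdan_warner_exists_unique_nonneg_general
    (b : ℝ → ℝ) (hb_cont : Continuous b) (hb_L2 : Integrable fun s => (b s) ^ 2) :
    (∃! ρ : ℝ → ℝ, IsW22SolutionKW b ρ) ∧
    ((∀ s, 0 ≤ b s) → ∀ ρ : ℝ → ℝ, IsW22SolutionKW b ρ → ∀ s : ℝ, 0 ≤ ρ s) := by
  obtain ⟨ρ, hρ_bdd⟩ := exists_isBoundedSolution_kazdanWarner hb_cont hb_L2
  have hρ : IsW22SolutionKW b ρ := hρ_bdd.isW22SolutionKW hb_L2
  refine ⟨⟨ρ, hρ, fun σ hσ => ?_⟩, fun hb_nonneg σ hσ => hσ.nonneg hb_nonneg⟩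
  exact funext fun s => le_antisymm (hσ.le hρ s) (hρ.le hσ s)

/-- Existence and uniqueness for the Kazdan–Warner equation, together with
nonnegativity of the unique solution. -/
theorem kazdan_warner_exists_unique_nonneg
    (b : ℝ → ℝ) (hb_smooth : ContDiff ℝ (⊤ : ℕ∞) b) (hb_nonneg : ∀ s, 0 ≤ b s)
    (hb_L1 : Integrable b) (hb_L2 : Integrable fun s => (b s) ^ 2) :
    (∃! ρ : ℝ → ℝ, IsW22SolutionKW b ρ) ∧
    (∀ ρ : ℝ → ℝ, IsW22SolutionKW b ρ → ∀ s : ℝ, 0 ≤ ρ s) :=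
  (kazdan_warner_exists_unique_nonneg_general b hb_smooth.continuous hb_L2).imp_right
    fun h => h hb_nonneg
end

section
/- Let b : ℝ → ℝ be a smooth, nonnegative, integrable function and let ρ be a W^{2,2} solution of the Kazdan–Warner equation ρ'' = 1 − e^{−ρ} − b. Then ∫_{−∞}^{∞} e^{−ρ(s)}·(b(s) + (ρ'(s))²) ds + ∫_{−∞}^{∞} (1 − e^{−ρ(s)})² ds = ‖b‖_{L¹}. -/
/-!
Put `u = 1 - e^{-ρ}`, so that `u' = e^{-ρ} ρ'` and the equation reads `ρ'' = u - b`. Pointwise,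
`e^{-ρ} (b + ρ'²) + u² = b + (u ρ'' + u' ρ')`, and the last bracket is the derivative of `u ρ'`, so
its integral vanishes. The integrability this needs comes from the embedding of `W^{1,2}(ℝ)` into
the bounded functions: `ρ` stays in a compact set, on which `r ↦ 1 - e^{-r}` is Lipschitz and
vanishes at `0`, so `u` is square-integrable along with `ρ`.
-/

open MeasureTheory Real

open Bornology Set

lemma isBounded_range_of_hasDerivAt_of_integrable {E : Type*} [NormedAddCommGroup E]
    [NormedSpace ℝ E] [CompleteSpace E] {f f' : ℝ → E} (hf : ∀ x, HasDerivAt f (f' x) x)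
    (hf' : Integrable f') : IsBounded (range f) := by
  refine isBounded_iff_forall_norm_le.2
    ⟨‖f 0‖ + ∫ t, ‖f' t‖, forall_mem_range.2 fun x => ?_⟩
  have hftc : ∫ t in (0 : ℝ)..x, f' t = f x - f 0 :=
    intervalIntegral.integral_eq_sub_of_hasDerivAt (fun t _ => hf t) hf'.intervalIntegrable
  calc ‖f x‖ = ‖f 0 + ∫ t in (0 : ℝ)..x, f' t‖ := by rw [hftc, add_sub_cancel]
    _ ≤ ‖f 0‖ + ‖∫ t in (0 : ℝ)..x, f' t‖ := norm_add_le _ _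
    _ ≤ ‖f 0‖ + ∫ t, ‖f' t‖ := by
      gcongr
      exact intervalIntegral.norm_integral_le_integral_norm_uIoc.trans
        (setIntegral_le_integral hf'.norm (.of_forall fun t => norm_nonneg _))

lemma isBounded_range_of_hasDerivAt_of_memLp_two {E : Type*} [NormedAddCommGroup E]
    [InnerProductSpace ℝ E] {f f' : ℝ → E} (hf : ∀ x, HasDerivAt f (f' x) x)
    (hf_memLp : MemLp f 2) (hf'_memLp : MemLp f' 2) : IsBounded (range f) := by
  have hinner : Integrable fun x => inner ℝ (f x) (f' x) :=
    (hf_memLp.norm.integrable_mul hf'_memLp.norm).mono' (hf_memLp.1.inner hf'_memLp.1)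
      (.of_forall fun x => norm_inner_le_norm _ _)
  obtain ⟨C, hC⟩ := isBounded_iff_forall_norm_le.1 <|
    isBounded_range_of_hasDerivAt_of_integrable (fun x => (hf x).norm_sq) (hinner.const_mul 2)
  refine isBounded_iff_forall_norm_le.2 ⟨√C, forall_mem_range.2 fun x => le_sqrt_of_sq_le ?_⟩
  exact (le_norm_self _).trans (hC _ (mem_range_self x))

section Composition

variable {α E : Type*} [MeasurableSpace α] {μ : Measure α}

lemma memLp_comp_of_locallyLipschitz {F : Type*} [NormedAddCommGroup E] [ProperSpace E]
    [NormedAddCommGroup F] {p : ENNReal} {f : α → E} {g : E → F} (hg : LocallyLipschitz g)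
    (hg_zero : g 0 = 0) (hf : MemLp f p μ) (hf_bdd : IsBounded (range f)) :
    MemLp (fun x => g (f x)) p μ := by
  have hK : IsCompact (insert 0 (closure (range f))) := hf_bdd.isCompact_closure.insert 0
  obtain ⟨C, hC⟩ := LocallyLipschitzOn.exists_lipschitzOnWith_of_compact hK
    hg.locallyLipschitzOn
  refine hf.of_le_mul (c := C) (hg.continuous.comp_aestronglyMeasurable hf.1)
    (.of_forall fun x => ?_)
  simpa [hg_zero] using hC.norm_sub_le
    (mem_insert_of_mem 0 (subset_closure (mem_range_self x))) (mem_insert 0 _)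

lemma integrable_comp_mul {𝕜 : Type*} [PseudoMetricSpace E] [ProperSpace E] [NormedRing 𝕜]
    {f : α → E} {h : E → 𝕜} {k : α → 𝕜} (hh : Continuous h) (hf : AEStronglyMeasurable f μ)
    (hf_bdd : IsBounded (range f)) (hk : Integrable k μ) :
    Integrable (fun x => h (f x) * k x) μ := by
  obtain ⟨C, hC⟩ := hf_bdd.isCompact_closure.exists_bound_of_continuousOn hh.continuousOn
  exact hk.bdd_mul (hh.comp_aestronglyMeasurable hf)
    (.of_forall fun x => hC _ (subset_closure (mem_range_self x)))

end Composition

lemma integral_comp_mul_deriv_deriv_eq_neg {ρ ρ' ρ'' g g' : ℝ → ℝ}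
    (hρ : ∀ s, HasDerivAt ρ (ρ' s) s) (hρ' : ∀ s, HasDerivAt ρ' (ρ'' s) s)
    (hg : ∀ r, HasDerivAt g (g' r) r) (hg' : Continuous g')
    (hρ_bdd : IsBounded (range ρ)) (hgρ_memLp : MemLp (fun s => g (ρ s)) 2)
    (hρ'_memLp : MemLp ρ' 2) (hρ''_memLp : MemLp ρ'' 2) :
    ∫ s, g (ρ s) * ρ'' s = -∫ s, g' (ρ s) * ρ' s ^ 2 := by
  have hρ_cont : Continuous ρ := continuous_iff_continuousAt.2 fun s => (hρ s).continuousAt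
  have hg'ρ_int : Integrable fun s => g' (ρ s) * ρ' s ^ 2 :=
    integrable_comp_mul hg' hρ_cont.aestronglyMeasurable hρ_bdd hρ'_memLp.integrable_sq
  simp only [pow_two, ← mul_assoc] at hg'ρ_int ⊢
  exact integral_mul_deriv_eq_deriv_mul_of_integrable (fun s _ => (hg (ρ s)).comp s (hρ s))
    (fun s _ => hρ' s) (hgρ_memLp.integrable_mul hρ''_memLp) hg'ρ_int
    (hgρ_memLp.integrable_mul hρ'_memLp)

lemma hasDerivAt_one_sub_exp_neg (r : ℝ) :
    HasDerivAt (fun r => 1 - exp (-r)) (exp (-r)) r := by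
  simpa using (hasDerivAt_neg r).exp.const_sub 1

namespace IsW22SolutionKW

variable {b ρ : ℝ → ℝ}

lemma hasDerivAt (h : IsW22SolutionKW b ρ) (s : ℝ) : HasDerivAt ρ (deriv ρ s) s :=
  (h.1.differentiable two_ne_zero s).hasDerivAt

lemma hasDerivAt_deriv (h : IsW22SolutionKW b ρ) (s : ℝ) :
    HasDerivAt (deriv ρ) (deriv (deriv ρ) s) s :=
  (h.1.deriv'.differentiable one_ne_zero s).hasDerivAt

lemma memLp (h : IsW22SolutionKW b ρ) : MemLp ρ 2 :=
  (memLp_two_iff_integrable_sq h.1.continuous.aestronglyMeasurable).2 h.2.1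

lemma memLp_deriv (h : IsW22SolutionKW b ρ) : MemLp (deriv ρ) 2 :=
  (memLp_two_iff_integrable_sq (aestronglyMeasurable_deriv ρ _)).2 h.2.2.1

lemma memLp_deriv_deriv (h : IsW22SolutionKW b ρ) : MemLp (deriv (deriv ρ)) 2 :=
  (memLp_two_iff_integrable_sq (aestronglyMeasurable_deriv _ _)).2 h.2.2.2.1

lemma deriv_deriv_eq (h : IsW22SolutionKW b ρ) (s : ℝ) :
    deriv (deriv ρ) s = 1 - exp (-ρ s) - b s :=
  h.2.2.2.2 s

lemma isBounded_range (h : IsW22SolutionKW b ρ) : IsBounded (range ρ) :=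
  isBounded_range_of_hasDerivAt_of_memLp_two h.hasDerivAt h.memLp h.memLp_deriv

lemma memLp_one_sub_exp_neg (h : IsW22SolutionKW b ρ) : MemLp (fun s => 1 - exp (-ρ s)) 2 := by
  have hsmooth : ContDiff ℝ 1 fun r : ℝ => 1 - exp (-r) := by fun_prop
  exact memLp_comp_of_locallyLipschitz (g := fun r => 1 - exp (-r)) hsmooth.locallyLipschitz
    (by simp) h.memLp h.isBounded_range

lemma integrable_exp_neg_mul (h : IsW22SolutionKW b ρ) {k : ℝ → ℝ} (hk : Integrable k) :
    Integrable fun s => exp (-ρ s) * k s :=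
  integrable_comp_mul (h := fun r => exp (-r)) (by fun_prop) h.memLp.1 h.isBounded_range hk

lemma integral_one_sub_exp_neg_mul_deriv_deriv (h : IsW22SolutionKW b ρ) :
    ∫ s, (1 - exp (-ρ s)) * deriv (deriv ρ) s = -∫ s, exp (-ρ s) * deriv ρ s ^ 2 :=
  integral_comp_mul_deriv_deriv_eq_neg h.hasDerivAt h.hasDerivAt_deriv hasDerivAt_one_sub_exp_neg
    (by fun_prop) h.isBounded_range h.memLp_one_sub_exp_neg h.memLp_deriv h.memLp_deriv_deriv

end IsW22SolutionKW

theorem kazdan_warner_energy_identity_general {b ρ : ℝ → ℝ} (hb : Integrable b)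
    (hρ : IsW22SolutionKW b ρ) :
    (∫ s, exp (-ρ s) * (b s + deriv ρ s ^ 2)) + ∫ s, (1 - exp (-ρ s)) ^ 2 = ∫ s, b s := by
  have hweighted : Integrable fun s => exp (-ρ s) * (b s + deriv ρ s ^ 2) :=
    hρ.integrable_exp_neg_mul (hb.add hρ.memLp_deriv.integrable_sq)
  have hforce : Integrable fun s => (1 - exp (-ρ s)) * deriv (deriv ρ) s :=
    hρ.memLp_one_sub_exp_neg.integrable_mul hρ.memLp_deriv_deriv
  have hgrad : Integrable fun s => exp (-ρ s) * deriv ρ s ^ 2 :=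
    hρ.integrable_exp_neg_mul hρ.memLp_deriv.integrable_sq
  calc (∫ s, exp (-ρ s) * (b s + deriv ρ s ^ 2)) + ∫ s, (1 - exp (-ρ s)) ^ 2
      = ∫ s, exp (-ρ s) * (b s + deriv ρ s ^ 2) + (1 - exp (-ρ s)) ^ 2 :=
        (integral_add hweighted hρ.memLp_one_sub_exp_neg.integrable_sq).symm
    _ = ∫ s, b s + ((1 - exp (-ρ s)) * deriv (deriv ρ) s + exp (-ρ s) * deriv ρ s ^ 2) := by
        congr 1 with s
        rw [hρ.deriv_deriv_eq]
        ring
    _ = ∫ s, b s := by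
        rw [integral_add hb (by exact hforce.add hgrad), integral_add hforce hgrad,
          hρ.integral_one_sub_exp_neg_mul_deriv_deriv, neg_add_cancel, add_zero]

/-- The energy identity for `W^{2,2}` solutions of the Kazdan–Warner equation:
`∫ e^{-ρ}(b + (ρ')²) + ∫ (1 - e^{-ρ})² = ‖b‖_{L¹}`. -/
theorem kazdan_warner_energy_identity
    (b : ℝ → ℝ) (hb_smooth : ContDiff ℝ (⊤ : ℕ∞) b) (hb_nonneg : ∀ s, 0 ≤ b s)
    (hb_L1 : Integrable b)
    (ρ : ℝ → ℝ) (hρ : IsW22SolutionKW b ρ) :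
    (∫ s : ℝ, Real.exp (-ρ s) * (b s + (deriv ρ s) ^ 2)) +
      (∫ s : ℝ, (1 - Real.exp (-ρ s)) ^ 2) = ∫ s : ℝ, |b s| := by
  simpa only [abs_of_nonneg (hb_nonneg _)] using kazdan_warner_energy_identity_general hb_L1 hρ
end

section
/- Let f : ℝ → ℝ be twice continuously differentiable with f, f' and f'' square-integrable on ℝ. Then ‖f'‖_{L²}² ≤ ‖f‖_{L²} · ‖f''‖_{L²}. -/
open MeasureTheory Real

/-!
Integrating by parts, `∫ ‖f'‖² = -∫ ⟪f, f''⟫`, and the Cauchy–Schwarz inequality bounds the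
right-hand side. The boundary terms vanish because both `⟪f, f'⟫` and its derivative are integrable.
-/

theorem norm_integral_inner_le_sqrt_mul_sqrt {𝕜 E α : Type*} [RCLike 𝕜] [NormedAddCommGroup E]
    [InnerProductSpace 𝕜 E] [MeasurableSpace α] {μ : Measure α} {u v : α → E}
    (hu : MemLp u 2 μ) (hv : MemLp v 2 μ) :
    ‖∫ a, inner 𝕜 (u a) (v a) ∂μ‖ ≤ √(∫ a, ‖u a‖ ^ 2 ∂μ) * √(∫ a, ‖v a‖ ^ 2 ∂μ) := by
  have holder := integral_mul_norm_le_Lp_mul_Lq HolderConjugate.two_two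
    (by simpa only [ENNReal.ofReal_ofNat] using hu) (by simpa only [ENNReal.ofReal_ofNat] using hv)
  calc ‖∫ a, inner 𝕜 (u a) (v a) ∂μ‖
      ≤ ∫ a, ‖u a‖ * ‖v a‖ ∂μ :=
        norm_integral_le_of_norm_le (hu.norm.integrable_mul hv.norm)
          (.of_forall fun a ↦ norm_inner_le_norm (u a) (v a))
    _ ≤ √(∫ a, ‖u a‖ ^ 2 ∂μ) * √(∫ a, ‖v a‖ ^ 2 ∂μ) := by
        simpa only [rpow_two, sqrt_eq_rpow] using holder

theorem integral_bilinear_hasDerivAt_right_eq_neg_left_of_memLp {E F G : Type*}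
    [NormedAddCommGroup E] [NormedSpace ℝ E] [NormedAddCommGroup F] [NormedSpace ℝ F]
    [NormedAddCommGroup G] [NormedSpace ℝ G] (L : E →L[ℝ] F →L[ℝ] G) {p q : ENNReal}
    [p.HolderConjugate q] {u u' : ℝ → E} {v v' : ℝ → F}
    (hu : ∀ x, HasDerivAt u (u' x) x) (hv : ∀ x, HasDerivAt v (v' x) x)
    (hu_Lp : MemLp u p) (hu'_Lp : MemLp u' p) (hv_Lq : MemLp v q) (hv'_Lq : MemLp v' q) :
    ∫ x, L (u x) (v' x) = -∫ x, L (u' x) (v x) :=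
  integral_bilinear_hasDerivAt_right_eq_neg_left_of_integrable
    (fun x _ ↦ hu x) (fun x _ ↦ hv x)
    (memLp_one_iff_integrable.1 (L.memLp_of_bilin 1 hu_Lp hv'_Lq))
    (memLp_one_iff_integrable.1 (L.memLp_of_bilin 1 hu'_Lp hv_Lq))
    (memLp_one_iff_integrable.1 (L.memLp_of_bilin 1 hu_Lp hv_Lq))

section

variable {E : Type*} [NormedAddCommGroup E] [InnerProductSpace ℝ E] {f f' f'' : ℝ → E}

theorem integral_norm_hasDerivAt_sq_eq_neg_integral_inner
    (hf : ∀ s, HasDerivAt f (f' s) s) (hf' : ∀ s, HasDerivAt f' (f'' s) s)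
    (hf_L2 : MemLp f 2) (hf'_L2 : MemLp f' 2) (hf''_L2 : MemLp f'' 2) :
    ∫ s, ‖f' s‖ ^ 2 = -∫ s, inner ℝ (f s) (f'' s) := by
  have by_parts : ∫ s, inner ℝ (f s) (f'' s) = -∫ s, inner ℝ (f' s) (f' s) :=
    integral_bilinear_hasDerivAt_right_eq_neg_left_of_memLp (innerSL ℝ)
      hf hf' hf_L2 hf'_L2 hf'_L2 hf''_L2
  simp only [by_parts, real_inner_self_eq_norm_sq, neg_neg]

theorem deriv_L2_sq_le_L2_mul_L2_of_second_deriv_general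
    (hf : ∀ s, HasDerivAt f (f' s) s) (hf' : ∀ s, HasDerivAt f' (f'' s) s)
    (hf_L2 : MemLp f 2) (hf'_L2 : MemLp f' 2) (hf''_L2 : MemLp f'' 2) :
    ∫ s, ‖f' s‖ ^ 2 ≤ √(∫ s, ‖f s‖ ^ 2) * √(∫ s, ‖f'' s‖ ^ 2) :=
  calc ∫ s, ‖f' s‖ ^ 2
      = -∫ s, inner ℝ (f s) (f'' s) :=
        integral_norm_hasDerivAt_sq_eq_neg_integral_inner hf hf' hf_L2 hf'_L2 hf''_L2
    _ ≤ ‖∫ s, inner ℝ (f s) (f'' s)‖ := neg_le_abs _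
    _ ≤ √(∫ s, ‖f s‖ ^ 2) * √(∫ s, ‖f'' s‖ ^ 2) :=
        norm_integral_inner_le_sqrt_mul_sqrt hf_L2 hf''_L2

end

/-- Interpolation inequality: for a twice continuously differentiable function `f : ℝ → ℝ`
with `f`, `f'`, `f''` square-integrable one has `‖f'‖_{L²}² ≤ ‖f‖_{L²} ⬝ ‖f''‖_{L²}`. -/
theorem deriv_L2_sq_le_L2_mul_L2_of_second_deriv
    (f : ℝ → ℝ) (hf : ContDiff ℝ 2 f)
    (hf_L2 : Integrable fun s => (f s) ^ 2)
    (hf'_L2 : Integrable fun s => (deriv f s) ^ 2)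
    (hf''_L2 : Integrable fun s => (deriv (deriv f) s) ^ 2) :
    (∫ s : ℝ, (deriv f s) ^ 2) ≤
      Real.sqrt (∫ s : ℝ, (f s) ^ 2) * Real.sqrt (∫ s : ℝ, (deriv (deriv f) s) ^ 2) := by
  simpa only [norm_eq_abs, sq_abs] using deriv_L2_sq_le_L2_mul_L2_of_second_deriv_general
    (fun s ↦ (hf.differentiable two_ne_zero s).hasDerivAt)
    (fun s ↦ (hf.differentiable_deriv_two s).hasDerivAt)
    ((memLp_two_iff_integrable_sq hf.continuous.aestronglyMeasurable).2 hf_L2)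
    ((memLp_two_iff_integrable_sq (aestronglyMeasurable_deriv f _)).2 hf'_L2)
    ((memLp_two_iff_integrable_sq (aestronglyMeasurable_deriv (deriv f) _)).2 hf''_L2)
end

section
/- Let f : ℝ → ℝ be continuously differentiable with f and f' square-integrable on ℝ. Then f(s) → 0 as s → +∞ and as s → −∞. -/
open MeasureTheory Real Filter

/-!
The function `‖f‖ ^ 2` has derivative `2 * ⟪f, f'⟫`, which is integrable by Hölder's inequality.
Hence `‖f‖ ^ 2` converges at infinity, and its limit must be `0` because `f` is in `L ^ p` for a
finite `p` and half-lines have infinite measure.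
-/

open Set Topology
open scoped ENNReal

lemma volume_eq_top_of_mem_atTop {s : Set ℝ} (hs : s ∈ atTop) : volume s = ∞ := by
  obtain ⟨b, hb⟩ := mem_atTop_sets.1 hs
  exact measure_mono_top (s₁ := Ici b) hb Real.volume_Ici

lemma volume_eq_top_of_mem_atBot {s : Set ℝ} (hs : s ∈ atBot) : volume s = ∞ := by
  obtain ⟨b, hb⟩ := mem_atBot_sets.1 hs
  exact measure_mono_top (s₁ := Iic b) hb Real.volume_Iic

lemma eq_zero_of_tendsto_of_memLp_restrict {α E : Type*} [MeasurableSpace α]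
    [NormedAddCommGroup E] {μ : Measure α} {l : Filter α} {s : Set α} {f : α → E} {c : E}
    {p : ℝ≥0∞} (hp₀ : p ≠ 0) (hp : p ≠ ∞) (hs : s ∈ l) (hμ : ∀ t ∈ l, μ t = ∞)
    (hf : MemLp f p (μ.restrict s)) (hc : Tendsto f l (𝓝 c)) : c = 0 := by
  have hp_pos : 0 < p.toReal := ENNReal.toReal_pos hp₀ hp
  have hint : IntegrableAtFilter (fun x => ‖f x‖ ^ p.toReal) l μ :=
    ⟨s, hs, hf.integrable_norm_rpow hp₀ hp⟩
  have hlim : ‖c‖ ^ p.toReal = 0 :=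
    hint.eq_zero_of_tendsto hμ (hc.norm.rpow_const (Or.inr hp_pos.le))
  exact norm_eq_zero.1 ((rpow_eq_zero (norm_nonneg c) hp_pos.ne').1 hlim)

lemma tendsto_zero_of_memLp_restrict_of_tendsto_norm_sq {α E : Type*} [MeasurableSpace α]
    [NormedAddCommGroup E] {μ : Measure α} {l : Filter α} {s : Set α} {f : α → E} {c : ℝ}
    {p : ℝ≥0∞} (hp₀ : p ≠ 0) (hp : p ≠ ∞) (hs : s ∈ l) (hμ : ∀ t ∈ l, μ t = ∞)
    (hf : MemLp f p (μ.restrict s)) (hc : Tendsto (‖f ·‖ ^ 2) l (𝓝 c)) :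
    Tendsto f l (𝓝 0) := by
  have hnorm : Tendsto (‖f ·‖) l (𝓝 √c) := by
    simpa only [Pi.pow_apply, sqrt_sq (norm_nonneg _)] using hc.sqrt
  have hsqrt : √c = 0 := eq_zero_of_tendsto_of_memLp_restrict hp₀ hp hs hμ hf.norm hnorm
  exact tendsto_zero_iff_norm_tendsto_zero.2 (hsqrt ▸ hnorm)

section HolderConjugate

variable {E : Type*} [NormedAddCommGroup E] [InnerProductSpace ℝ E] {p q : ℝ≥0∞}
  [p.HolderConjugate q]

lemma integrable_inner_of_memLp {α : Type*} [MeasurableSpace α] {μ : Measure α} {f g : α → E}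
    (hf : MemLp f p μ) (hg : MemLp g q μ) : Integrable (fun x => inner ℝ (f x) (g x)) μ :=
  memLp_one_iff_integrable.1 ((innerSL ℝ).memLp_of_bilin 1 hf hg)

variable {f f' : ℝ → E} {a : ℝ}

lemma tendsto_zero_atTop_of_hasDerivAt_of_memLp_Ioi (hp : p ≠ ∞)
    (hderiv : ∀ s ∈ Ioi a, HasDerivAt f (f' s) s) (hf : MemLp f p (volume.restrict (Ioi a)))
    (hf' : MemLp f' q (volume.restrict (Ioi a))) : Tendsto f atTop (𝓝 0) :=
  tendsto_zero_of_memLp_restrict_of_tendsto_norm_sq (ENNReal.HolderConjugate.ne_zero p q) hp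
    (Ioi_mem_atTop a) (fun _ => volume_eq_top_of_mem_atTop) hf
    (tendsto_limUnder_of_hasDerivAt_of_integrableOn_Ioi (fun s hs => (hderiv s hs).norm_sq)
      ((integrable_inner_of_memLp hf hf').const_mul 2))

lemma tendsto_zero_atBot_of_hasDerivAt_of_memLp_Iic (hp : p ≠ ∞)
    (hderiv : ∀ s ∈ Iic a, HasDerivAt f (f' s) s) (hf : MemLp f p (volume.restrict (Iic a)))
    (hf' : MemLp f' q (volume.restrict (Iic a))) : Tendsto f atBot (𝓝 0) :=
  tendsto_zero_of_memLp_restrict_of_tendsto_norm_sq (ENNReal.HolderConjugate.ne_zero p q) hp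
    (Iic_mem_atBot a) (fun _ => volume_eq_top_of_mem_atBot) hf
    (tendsto_limUnder_of_hasDerivAt_of_integrableOn_Iic (fun s hs => (hderiv s hs).norm_sq)
      ((integrable_inner_of_memLp hf hf').const_mul 2))

theorem tendsto_zero_atTop_atBot_of_L2_deriv_L2_general (hp : p ≠ ∞)
    (hderiv : ∀ s, HasDerivAt f (f' s) s) (hf : MemLp f p) (hf' : MemLp f' q) :
    Tendsto f atTop (𝓝 0) ∧ Tendsto f atBot (𝓝 0) :=
  ⟨tendsto_zero_atTop_of_hasDerivAt_of_memLp_Ioi (a := 0) hp (fun s _ => hderiv s)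
      (hf.restrict _) (hf'.restrict _),
    tendsto_zero_atBot_of_hasDerivAt_of_memLp_Iic (a := 0) hp (fun s _ => hderiv s)
      (hf.restrict _) (hf'.restrict _)⟩

end HolderConjugate

/-- A continuously differentiable function `f : ℝ → ℝ` with `f` and `f'` square-integrable
tends to `0` at `+∞` and at `-∞`. -/
theorem tendsto_zero_atTop_atBot_of_L2_deriv_L2
    (f : ℝ → ℝ) (hf : ContDiff ℝ 1 f)
    (hf_L2 : Integrable fun s => (f s) ^ 2)
    (hf'_L2 : Integrable fun s => (deriv f s) ^ 2) :
    Tendsto f atTop (nhds 0) ∧ Tendsto f atBot (nhds 0) := by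
  exact tendsto_zero_atTop_atBot_of_L2_deriv_L2_general ENNReal.ofNat_ne_top
    (fun s => (hf.differentiable one_ne_zero s).hasDerivAt)
    ((memLp_two_iff_integrable_sq hf.continuous.aestronglyMeasurable).2 hf_L2)
    ((memLp_two_iff_integrable_sq (aestronglyMeasurable_deriv f volume)).2 hf'_L2)
end

section
/- Let ρ : ℝ → ℝ be continuous and let ξ : ℝ → ℝ be twice continuously differentiable with ξ, ξ' and ξ'' square-integrable on ℝ. If ξ''(s) = e^{−ρ(s)}·ξ(s) for all s ∈ ℝ, then ξ is identically zero. In other words, the linearized operator D_ρ : ξ ↦ ξ'' − e^{−ρ}ξ is injective. -/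
open MeasureTheory Real

/-!
If `⟪ξ, ξ''⟫ ≥ 0`, then `(‖ξ‖²)'' = 2 (⟪ξ, ξ''⟫ + ‖ξ'‖²) ≥ 0`, so `‖ξ‖²` is convex. The value of a
convex function at `x` is at most the average of its values at `x + y` and `x - y`; if the function
is integrable, then so is this average as a function of `y`, and on a space of infinite measure it
cannot dominate a positive constant. Hence `‖ξ‖² ≤ 0`.
-/

open scoped InnerProductSpace

theorem nonpos_of_convexOn_univ_of_integrable {E : Type*} [AddCommGroup E] [Module ℝ E]
    [MeasurableSpace E] [MeasurableAdd E] [MeasurableNeg E] {μ : Measure E} [μ.IsAddLeftInvariant]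
    [μ.IsNegInvariant] (hμ : ¬ IsFiniteMeasure μ) {g : E → ℝ} (hg : ConvexOn ℝ Set.univ g)
    (hint : Integrable g μ) (x : E) : g x ≤ 0 := by
  by_contra! hpos
  have hle (y : E) : g x ≤ (1 / 2) * (g (x + y) + g (x - y)) := by
    have h := hg.2 (Set.mem_univ (x + y)) (Set.mem_univ (x - y))
      (one_half_pos (α := ℝ)).le one_half_pos.le (add_halves 1)
    rwa [show (1 / 2 : ℝ) • (x + y) + (1 / 2 : ℝ) • (x - y) = x by module, ← smul_add] at h
  have haverage : Integrable (fun y ↦ (1 / 2) * (g (x + y) + g (x - y))) μ :=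
    ((hint.comp_add_left x).add (hint.comp_sub_left x)).const_mul _
  have hconst : Integrable (fun _ ↦ g x) μ :=
    haverage.mono' aestronglyMeasurable_const <| .of_forall fun y ↦ by
      simpa only [norm_of_nonneg hpos.le] using hle y
  exact (integrable_const_iff.mp hconst).elim hpos.ne' hμ

section

variable {F : Type*} [NormedAddCommGroup F] [InnerProductSpace ℝ F]

theorem convexOn_norm_sq_of_hasDerivWithinAt2_inner_nonneg {D : Set ℝ} (hD : Convex ℝ D)
    {f f' f'' : ℝ → F} (hf : ContinuousOn f D)
    (hf' : ∀ x ∈ interior D, HasDerivWithinAt f (f' x) (interior D) x)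
    (hf'' : ∀ x ∈ interior D, HasDerivWithinAt f' (f'' x) (interior D) x)
    (hinner : ∀ x ∈ interior D, 0 ≤ ⟪f x, f'' x⟫_ℝ) : ConvexOn ℝ D fun x ↦ ‖f x‖ ^ 2 :=
  convexOn_of_hasDerivWithinAt2_nonneg hD (hf.norm.pow 2) (fun x hx ↦ (hf' x hx).norm_sq)
    (fun x hx ↦ ((hf' x hx).inner ℝ (hf'' x hx)).const_mul 2) fun x hx ↦
      mul_nonneg zero_le_two (add_nonneg (hinner x hx) real_inner_self_nonneg)

theorem linearized_operator_injective_general {ξ : ℝ → F} (hξ : Differentiable ℝ ξ)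
    (hξ' : Differentiable ℝ (deriv ξ)) (hξ_L2 : Integrable fun s ↦ ‖ξ s‖ ^ 2)
    (hinner : ∀ s, 0 ≤ ⟪ξ s, deriv (deriv ξ) s⟫_ℝ) (s : ℝ) : ξ s = 0 := by
  have hconv : ConvexOn ℝ Set.univ fun s ↦ ‖ξ s‖ ^ 2 :=
    convexOn_norm_sq_of_hasDerivWithinAt2_inner_nonneg convex_univ hξ.continuous.continuousOn
      (fun s _ ↦ (hξ s).hasDerivAt.hasDerivWithinAt)
      (fun s _ ↦ (hξ' s).hasDerivAt.hasDerivWithinAt) fun s _ ↦ hinner s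
  have hnonpos : ‖ξ s‖ ^ 2 ≤ 0 :=
    nonpos_of_convexOn_univ_of_integrable (not_isFiniteMeasure_iff.mpr volume_univ) hconv hξ_L2 s
  exact norm_eq_zero.mp (sq_nonpos_iff _ |>.mp hnonpos)

end

/-- Injectivity of the linearized operator `D_ρ : ξ ↦ ξ'' - e^{-ρ} ξ`:
if `ξ` is twice continuously differentiable with `ξ`, `ξ'`, `ξ''` square-integrable and
`ξ'' = e^{-ρ} ξ`, then `ξ` vanishes identically. -/
theorem linearized_operator_injective
    (ρ : ℝ → ℝ) (hρ_cont : Continuous ρ)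
    (ξ : ℝ → ℝ) (hξ : ContDiff ℝ 2 ξ)
    (hξ_L2 : Integrable fun s => (ξ s) ^ 2)
    (hξ'_L2 : Integrable fun s => (deriv ξ s) ^ 2)
    (hξ''_L2 : Integrable fun s => (deriv (deriv ξ) s) ^ 2)
    (hker : ∀ s : ℝ, deriv (deriv ξ) s = Real.exp (-ρ s) * ξ s) :
    ∀ s : ℝ, ξ s = 0 := by
  refine linearized_operator_injective_general (hξ.differentiable two_ne_zero)
    hξ.differentiable_deriv_two (by simpa using hξ_L2) fun s ↦ ?_
  simpa only [hker, ← smul_eq_mul, real_inner_smul_right] using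
    mul_nonneg (exp_pos (-ρ s)).le real_inner_self_nonneg
end

section
/- Let ρ : ℝ → ℝ be a continuous function with ρ(s) → 0 as s → ±∞. Then for every continuous square-integrable function η : ℝ → ℝ there exists a unique twice continuously differentiable function ξ : ℝ → ℝ with ξ, ξ' and ξ'' square-integrable on ℝ such that ξ''(s) − e^{−ρ(s)}·ξ(s) = η(s) for all s ∈ ℝ. In other words, the operator D_ρ : ξ ↦ ξ'' − e^{−ρ}ξ is a bijection from W^{2,2}-regular functions onto continuous L² functions. -/
open MeasureTheory Real Filter

open scoped Convolution ENNReal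

/-!
The potential `q = e^{-ρ}` lies between two positive constants `m ≤ M`. With `k² = M` the equation
reads `ξ = G (η + (q - k²) ξ)`, where `G` inverts `∂² - k² = (∂ + k)(∂ - k)`. Each first-order
factor is inverted by convolution with a one-sided exponential of mass `1 / k`, so by Young's
inequality `G` has norm at most `1 / k²` on every `L^p`. Since `|q - k²| ≤ M - m < k²`, the
right-hand side is a contraction of `L^p`; its fixed point lies in the range of `G`, hence is
continuous, and then of class `C²`. Uniqueness is the energy identity `∫ ⟪w, w''⟫ = -∫ ‖w'‖²`,
whose left-hand side is `∫ q ‖w‖²` when `w'' = q w`.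
-/

section Young

theorem lintegral_mul_rpow_le {α : Type*} [MeasurableSpace α] {μ : Measure α} {φ g : α → ℝ≥0∞}
    (hφ : AEMeasurable φ μ) (hg : AEMeasurable g μ) {r : ℝ} (hr : 1 ≤ r) :
    (∫⁻ a, φ a * g a ∂μ) ^ r ≤ (∫⁻ a, φ a ∂μ) ^ (r - 1) * ∫⁻ a, φ a * g a ^ r ∂μ := by
  have hr₀ : 0 < r := by linarith
  have hr_inv : 0 ≤ 1 - r⁻¹ := sub_nonneg.2 (inv_le_one_of_one_le₀ hr)
  have hsplit (a : α) : φ a * g a = φ a ^ (1 - r⁻¹) * (φ a * g a ^ r) ^ r⁻¹ := by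
    rw [ENNReal.mul_rpow_of_nonneg _ _ (by positivity), ENNReal.rpow_rpow_inv hr₀.ne', ← mul_assoc,
      ← ENNReal.rpow_add_of_nonneg _ _ hr_inv (by positivity), sub_add_cancel, ENNReal.rpow_one]
  calc (∫⁻ a, φ a * g a ∂μ) ^ r
      ≤ ((∫⁻ a, φ a ∂μ) ^ (1 - r⁻¹) * (∫⁻ a, φ a * g a ^ r ∂μ) ^ r⁻¹) ^ r := by
        simp only [hsplit]
        gcongr
        exact ENNReal.lintegral_mul_norm_pow_le hφ (by fun_prop) hr_inv (by positivity) (by ring)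
    _ = (∫⁻ a, φ a ∂μ) ^ (r - 1) * ∫⁻ a, φ a * g a ^ r ∂μ := by
        rw [ENNReal.mul_rpow_of_nonneg _ _ hr₀.le, ENNReal.rpow_inv_rpow hr₀.ne',
          ← ENNReal.rpow_mul, sub_mul, one_mul, inv_mul_cancel₀ hr₀.ne']

variable {G : Type*} [MeasurableSpace G] [AddGroup G] {μ : Measure G}

theorem lintegral_rpow_lintegral_mul_sub_le [MeasurableAdd₂ G] [MeasurableNeg G] [SFinite μ]
    [μ.IsAddRightInvariant] {φ g : G → ℝ≥0∞} (hφ : AEMeasurable φ μ) (hg : AEMeasurable g μ)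
    {r : ℝ} (hr : 1 ≤ r) :
    ∫⁻ x, (∫⁻ t, φ t * g (x - t) ∂μ) ^ r ∂μ ≤ (∫⁻ t, φ t ∂μ) ^ r * ∫⁻ x, g x ^ r ∂μ := by
  have hg_sub : AEMeasurable (fun z : G × G => g (z.1 - z.2)) (μ.prod μ) :=
    hg.comp_quasiMeasurePreserving (quasiMeasurePreserving_sub_of_right_invariant μ μ)
  have hg_section : ∀ᵐ x ∂μ, AEMeasurable (fun t => g (x - t)) μ :=
    hg_sub.aestronglyMeasurable.prodMk_left.mono fun _ hx => hx.aemeasurable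
  have hint : AEMeasurable (fun z : G × G => φ z.2 * g (z.1 - z.2) ^ r) (μ.prod μ) :=
    hφ.comp_snd.mul (hg_sub.pow_const r)
  calc ∫⁻ x, (∫⁻ t, φ t * g (x - t) ∂μ) ^ r ∂μ
      ≤ ∫⁻ x, (∫⁻ t, φ t ∂μ) ^ (r - 1) * ∫⁻ t, φ t * g (x - t) ^ r ∂μ ∂μ :=
        lintegral_mono_ae (hg_section.mono fun _ hx => lintegral_mul_rpow_le hφ hx hr)
    _ = (∫⁻ t, φ t ∂μ) ^ (r - 1) * ∫⁻ t, φ t * ∫⁻ x, g x ^ r ∂μ ∂μ := by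
        rw [lintegral_const_mul'' _ hint.lintegral_prod_right', lintegral_lintegral_swap hint]
        congr! 3 with t
        have hg_translate : AEMeasurable (fun x => g (x - t)) μ :=
          hg.comp_quasiMeasurePreserving
            (measurePreserving_sub_right μ t).quasiMeasurePreserving
        dsimp only
        rw [lintegral_const_mul'' _ (hg_translate.pow_const r),
          lintegral_sub_right_eq_self (fun x => g x ^ r)]
    _ = (∫⁻ t, φ t ∂μ) ^ r * ∫⁻ x, g x ^ r ∂μ := by
        rw [lintegral_mul_const'' _ hφ, ← mul_assoc]
        nth_rw 2 [← ENNReal.rpow_one (∫⁻ t, φ t ∂μ)]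
        rw [← ENNReal.rpow_add_of_nonneg _ _ (by linarith) zero_le_one, sub_add_cancel]

variable {𝕜 E E' F : Type*} [NontriviallyNormedField 𝕜] [NormedAddCommGroup E] [NormedSpace 𝕜 E]
  [NormedAddCommGroup E'] [NormedSpace 𝕜 E'] [NormedAddCommGroup F] [NormedSpace 𝕜 F]
  [NormedSpace ℝ F] {f : G → E} {g : G → E'} {p : ℝ≥0∞}

theorem enorm_convolution_le (L : E →L[𝕜] E' →L[𝕜] F) (x : G) :
    ‖(f ⋆[L, μ] g) x‖ₑ ≤ ‖L‖ₑ * ∫⁻ t, ‖f t‖ₑ * ‖g (x - t)‖ₑ ∂μ := by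
  rw [← lintegral_const_mul' _ _ enorm_ne_top]
  refine (enorm_integral_le_lintegral_enorm _).trans (lintegral_mono fun t => ?_)
  rw [← mul_assoc]
  exact ((L (f t)).le_opENorm _).trans (by gcongr; exact L.le_opENorm _)

variable [MeasurableAdd₂ G] [MeasurableNeg G] [SFinite μ] [μ.IsAddRightInvariant]

theorem eLpNorm_top_convolution_le (L : E →L[𝕜] E' →L[𝕜] F) (hf : AEStronglyMeasurable f μ) :
    eLpNorm (f ⋆[L, μ] g) ∞ μ ≤ ‖L‖ₑ * eLpNorm f 1 μ * eLpNorm g ∞ μ := by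
  have hg_sub : ∀ᵐ x ∂μ, ∀ᵐ t ∂μ, ‖g (x - t)‖ₑ ≤ eLpNormEssSup g μ :=
    Measure.ae_ae_of_ae_prod
      ((quasiMeasurePreserving_sub_of_right_invariant μ μ).ae ae_le_eLpNormEssSup)
  simp only [eLpNorm_exponent_top]
  refine essSup_le_of_ae_le _ (hg_sub.mono fun x hx => (enorm_convolution_le L x).trans ?_)
  calc ‖L‖ₑ * ∫⁻ t, ‖f t‖ₑ * ‖g (x - t)‖ₑ ∂μ
      ≤ ‖L‖ₑ * ∫⁻ t, ‖f t‖ₑ * eLpNormEssSup g μ ∂μ :=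
        mul_le_mul' le_rfl (lintegral_mono_ae (hx.mono fun _ ht => mul_le_mul' le_rfl ht))
    _ = ‖L‖ₑ * eLpNorm f 1 μ * eLpNormEssSup g μ := by
        rw [lintegral_mul_const'' _ hf.enorm, ← eLpNorm_one_eq_lintegral_enorm, mul_assoc]

theorem eLpNorm_convolution_le (L : E →L[𝕜] E' →L[𝕜] F) (hf : AEStronglyMeasurable f μ)
    (hg : AEStronglyMeasurable g μ) (hp : 1 ≤ p) :
    eLpNorm (f ⋆[L, μ] g) p μ ≤ ‖L‖ₑ * eLpNorm f 1 μ * eLpNorm g p μ := by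
  obtain rfl | hp_top := eq_or_ne p ∞
  · exact eLpNorm_top_convolution_le L hf
  have hp₀ : p ≠ 0 := (zero_lt_one.trans_le hp).ne'
  have hr : 1 ≤ p.toReal := by simpa using ENNReal.toReal_mono hp_top hp
  have hr₀ : 0 < p.toReal := by linarith
  simp only [eLpNorm_eq_lintegral_rpow_enorm_toReal hp₀ hp_top, eLpNorm_one_eq_lintegral_enorm,
    one_div]
  rw [ENNReal.rpow_inv_le_iff hr₀, ENNReal.mul_rpow_of_nonneg _ _ hr₀.le,
    ENNReal.rpow_inv_rpow hr₀.ne', ENNReal.mul_rpow_of_nonneg _ _ hr₀.le, mul_assoc]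
  calc ∫⁻ x, ‖(f ⋆[L, μ] g) x‖ₑ ^ p.toReal ∂μ
      ≤ ∫⁻ x, ‖L‖ₑ ^ p.toReal * (∫⁻ t, ‖f t‖ₑ * ‖g (x - t)‖ₑ ∂μ) ^ p.toReal ∂μ := by
        gcongr with x
        rw [← ENNReal.mul_rpow_of_nonneg _ _ hr₀.le]
        gcongr
        exact enorm_convolution_le L x
    _ ≤ ‖L‖ₑ ^ p.toReal * ((∫⁻ t, ‖f t‖ₑ ∂μ) ^ p.toReal * ∫⁻ x, ‖g x‖ₑ ^ p.toReal ∂μ) := by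
        rw [lintegral_const_mul' _ _ (by finiteness)]
        gcongr
        exact lintegral_rpow_lintegral_mul_sub_le hf.enorm hg.enorm hr

theorem memLp_convolution (L : E →L[𝕜] E' →L[𝕜] F) (hf : Integrable f μ) (hg : MemLp g p μ)
    (hp : 1 ≤ p) : MemLp (f ⋆[L, μ] g) p μ :=
  ⟨(hf.aestronglyMeasurable.convolution_integrand L hg.aestronglyMeasurable).integral_prod_right',
    (eLpNorm_convolution_le L hf.aestronglyMeasurable hg.aestronglyMeasurable hp).trans_lt
      (ENNReal.mul_lt_top (ENNReal.mul_lt_top enorm_lt_top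
        (memLp_one_iff_integrable.2 hf).eLpNorm_lt_top) hg.eLpNorm_lt_top)⟩

end Young

section Reflection

variable {G E : Type*} [MeasurableSpace G] [Neg G] [MeasurableNeg G] [NormedAddCommGroup E]
  {μ : Measure G} [μ.IsNegInvariant] {f : G → E} {p : ℝ≥0∞}

theorem memLp_comp_neg (hf : MemLp f p μ) : MemLp (fun t => f (-t)) p μ :=
  hf.comp_measurePreserving (Measure.measurePreserving_neg μ)

theorem eLpNorm_comp_neg (hf : AEStronglyMeasurable f μ) :
    eLpNorm (fun t => f (-t)) p μ = eLpNorm f p μ :=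
  eLpNorm_comp_measurePreserving hf (Measure.measurePreserving_neg μ)

end Reflection

section BoundedMultiplier

variable {α 𝕜 E : Type*} [NormedField 𝕜] [NormedAddCommGroup E] [NormedSpace 𝕜 E] {V : α → 𝕜}
  {u : α → E} {c : ℝ}

theorem norm_smul_apply_le_of_norm_le (hVc : ∀ s, ‖V s‖ ≤ c) (s : α) :
    ‖(V • u) s‖ ≤ c * ‖u s‖ := by
  rw [Pi.smul_apply', norm_smul]
  gcongr
  exact hVc s

variable [MeasurableSpace α] {μ : Measure α} {p : ℝ≥0∞}

theorem memLp_smul_of_norm_le (hV : AEStronglyMeasurable V μ) (hVc : ∀ s, ‖V s‖ ≤ c)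
    (hu : MemLp u p μ) : MemLp (V • u) p μ :=
  hu.of_le_mul (hV.smul hu.aestronglyMeasurable) (ae_of_all _ (norm_smul_apply_le_of_norm_le hVc))

theorem eLpNorm_smul_le_of_norm_le (hVc : ∀ s, ‖V s‖ ≤ c) :
    eLpNorm (V • u) p μ ≤ ENNReal.ofReal c * eLpNorm u p μ :=
  eLpNorm_le_mul_eLpNorm_of_ae_le_mul (ae_of_all _ (norm_smul_apply_le_of_norm_le hVc)) p

end BoundedMultiplier

section ExpKernel

/-- The fundamental solution of `∂ + k` supported on the half-line `[0, ∞)`. -/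
noncomputable def expKernel (k : ℝ) : ℝ → ℝ :=
  (Set.Ici 0).indicator fun t => exp (-k * t)

variable {k : ℝ}

theorem measurable_expKernel (k : ℝ) : Measurable (expKernel k) :=
  Measurable.indicator (by fun_prop) measurableSet_Ici

theorem expKernel_nonneg (k t : ℝ) : 0 ≤ expKernel k t :=
  Set.indicator_nonneg (fun _ _ => (exp_pos _).le) t

theorem expKernel_le_one (hk : 0 ≤ k) (t : ℝ) : expKernel k t ≤ 1 := by
  refine Set.indicator_le' (fun t ht => ?_) (fun _ _ => zero_le_one) t
  exact exp_le_one_iff.2 (mul_nonpos_of_nonpos_of_nonneg (neg_nonpos.2 hk) ht)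

theorem integrable_expKernel (hk : 0 < k) : Integrable (expKernel k) :=
  (integrable_indicator_iff measurableSet_Ici).2 <|
    (integrableOn_Ici_iff_integrableOn_Ioi).2 (integrableOn_exp_mul_Ioi (neg_lt_zero.2 hk) 0)

theorem integral_expKernel (hk : 0 < k) : ∫ t, expKernel k t = k⁻¹ := by
  simp only [expKernel]
  rw [integral_indicator measurableSet_Ici, integral_Ici_eq_integral_Ioi,
    integral_exp_mul_Ioi (neg_lt_zero.2 hk), mul_zero, exp_zero, neg_div_neg_eq, one_div]

theorem eLpNorm_one_expKernel (hk : 0 < k) : eLpNorm (expKernel k) 1 = ENNReal.ofReal k⁻¹ := by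
  rw [eLpNorm_one_eq_lintegral_enorm, ← integral_expKernel hk,
    ← ofReal_integral_norm_eq_lintegral_enorm (integrable_expKernel hk)]
  simp only [norm_of_nonneg (expKernel_nonneg k _)]

theorem expKernel_rpow (k t : ℝ) {r : ℝ} (hr : 0 < r) :
    expKernel k t ^ r = expKernel (k * r) t := by
  by_cases ht : t ∈ Set.Ici 0
  · simp only [expKernel, Set.indicator_of_mem ht, ← exp_mul]
    ring_nf
  · simp only [expKernel, Set.indicator_of_notMem ht, zero_rpow hr.ne']

theorem memLp_expKernel (hk : 0 < k) {q : ℝ≥0∞} (hq : q ≠ 0) : MemLp (expKernel k) q := by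
  have hmeas : AEStronglyMeasurable (expKernel k) := (measurable_expKernel k).aestronglyMeasurable
  obtain rfl | hq_top := eq_or_ne q ∞
  · refine memLp_top_of_bound hmeas 1 (ae_of_all _ fun t => ?_)
    rw [norm_of_nonneg (expKernel_nonneg k t)]
    exact expKernel_le_one hk.le t
  · have hr : 0 < q.toReal := ENNReal.toReal_pos hq hq_top
    rw [← integrable_norm_rpow_iff hmeas hq hq_top]
    simp only [norm_of_nonneg (expKernel_nonneg k _), expKernel_rpow k _ hr]
    exact integrable_expKernel (mul_pos hk hr)

end ExpKernel

section HalfLineIntegral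

variable {E : Type*} [NormedAddCommGroup E] [NormedSpace ℝ E] {f : ℝ → E}

theorem integral_Iic_eq_add_intervalIntegral (hf : ∀ s, IntegrableOn f (Set.Iic s)) (s : ℝ) :
    ∫ t in Set.Iic s, f t = (∫ t in Set.Iic 0, f t) + ∫ t in 0..s, f t := by
  rw [← intervalIntegral.integral_Iic_sub_Iic (hf 0) (hf s), add_sub_cancel]

theorem continuous_integral_Iic (hf : ∀ s, IntegrableOn f (Set.Iic s)) :
    Continuous fun s => ∫ t in Set.Iic s, f t := by
  rw [funext (integral_Iic_eq_add_intervalIntegral hf)]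
  refine continuous_const.add (intervalIntegral.continuous_primitive (fun a b => ?_) 0)
  exact ((hf (max a b)).mono_set Set.Icc_subset_Iic_self).intervalIntegrable

theorem hasDerivAt_integral_Iic_s10 [CompleteSpace E] (hf : ∀ s, IntegrableOn f (Set.Iic s))
    (hf_cont : Continuous f) (s : ℝ) : HasDerivAt (fun s => ∫ t in Set.Iic s, f t) (f s) s := by
  rw [funext (integral_Iic_eq_add_intervalIntegral hf)]
  exact (hf_cont.integral_hasStrictDerivAt 0 s).hasDerivAt.const_add _

end HalfLineIntegral

section CausalResolvent

variable {E : Type*} [NormedAddCommGroup E] [NormedSpace ℝ E] {k : ℝ} {f g : ℝ → E} {p : ℝ≥0∞}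

/-- The solution operator `(∂ + k)⁻¹`, acting by convolution with the fundamental solution. -/
noncomputable def causalResolvent (k : ℝ) (f : ℝ → E) : ℝ → E :=
  expKernel k ⋆[ContinuousLinearMap.lsmul ℝ ℝ] f

theorem expKernel_sub_smul (k s : ℝ) (f : ℝ → E) :
    (fun t => expKernel k (s - t) • f t) =
      (Set.Iic s).indicator fun t => exp (-k * s) • exp (k * t) • f t := by
  ext t
  by_cases ht : t ≤ s
  · rw [expKernel, Set.indicator_of_mem (by simpa using ht),
      Set.indicator_of_mem (by simpa using ht), smul_smul, ← exp_add]
    ring_nf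
  · rw [expKernel, Set.indicator_of_notMem (by simpa using ht),
      Set.indicator_of_notMem (by simpa using ht), zero_smul]

theorem causalResolvent_apply (k : ℝ) (f : ℝ → E) (s : ℝ) :
    causalResolvent k f s = exp (-k * s) • ∫ t in Set.Iic s, exp (k * t) • f t := by
  rw [causalResolvent, convolution_lsmul_swap, expKernel_sub_smul,
    integral_indicator measurableSet_Iic, integral_smul]

theorem integrable_expKernel_sub_smul (hk : 0 < k) (hp : 1 ≤ p) (hf : MemLp f p) (s : ℝ) :
    Integrable fun t => expKernel k (s - t) • f t := by
  have := ENNReal.HolderConjugate.conjExponent hp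
  have hq : p.conjExponent ≠ 0 := ENNReal.HolderConjugate.ne_zero p.conjExponent p
  have hkernel : MemLp (fun t => expKernel k (s - t)) p.conjExponent :=
    (memLp_expKernel hk hq).comp_measurePreserving (Measure.measurePreserving_sub_left volume s)
  exact memLp_one_iff_integrable.1 (hf.smul hkernel)

theorem integrableOn_exp_smul_Iic (hk : 0 < k) (hp : 1 ≤ p) (hf : MemLp f p) (s : ℝ) :
    IntegrableOn (fun t => exp (k * t) • f t) (Set.Iic s) := by
  have h := integrable_expKernel_sub_smul hk hp hf s
  rw [expKernel_sub_smul, integrable_indicator_iff measurableSet_Iic] at h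
  exact (integrable_smul_iff (exp_ne_zero _) _).1 h

theorem continuous_causalResolvent (hk : 0 < k) (hp : 1 ≤ p) (hf : MemLp f p) :
    Continuous (causalResolvent k f) := by
  simp only [funext (causalResolvent_apply k f)]
  exact (by fun_prop : Continuous fun s => exp (-k * s)).smul
    (continuous_integral_Iic (integrableOn_exp_smul_Iic hk hp hf))

theorem hasDerivAt_causalResolvent [CompleteSpace E] (hk : 0 < k) (hp : 1 ≤ p) (hf : MemLp f p)
    (hf_cont : Continuous f) (s : ℝ) :
    HasDerivAt (causalResolvent k f) (f s - k • causalResolvent k f s) s := by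
  have hexp : HasDerivAt (fun s => exp (-k * s)) (-k * exp (-k * s)) s := by
    simpa only [mul_one, mul_comm (exp _)] using (hasDerivAt_const_mul (-k)).exp
  have hint := hasDerivAt_integral_Iic_s10 (integrableOn_exp_smul_Iic hk hp hf)
    (by fun_prop : Continuous fun t => exp (k * t) • f t) s
  rw [causalResolvent_apply, funext (causalResolvent_apply k f)]
  refine (hexp.smul hint).congr_deriv ?_
  rw [smul_smul _ _ (f s), ← exp_add, ← add_mul, neg_add_cancel, zero_mul, exp_zero, one_smul,
    neg_mul, neg_smul, mul_smul, sub_eq_add_neg]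

theorem causalResolvent_sub (hk : 0 < k) (hp : 1 ≤ p) (hf : MemLp f p) (hg : MemLp g p) :
    causalResolvent k (f - g) = causalResolvent k f - causalResolvent k g := by
  ext s
  simp only [Pi.sub_apply, causalResolvent_apply, smul_sub]
  rw [integral_sub (integrableOn_exp_smul_Iic hk hp hf s) (integrableOn_exp_smul_Iic hk hp hg s),
    smul_sub]

theorem memLp_causalResolvent (hk : 0 < k) (hp : 1 ≤ p) (hf : MemLp f p) :
    MemLp (causalResolvent k f) p :=
  memLp_convolution _ (integrable_expKernel hk) hf hp

theorem eLpNorm_causalResolvent_le (hk : 0 < k) (hp : 1 ≤ p) (hf : AEStronglyMeasurable f) :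
    eLpNorm (causalResolvent k f) p ≤ ENNReal.ofReal k⁻¹ * eLpNorm f p := by
  have hL : ‖(ContinuousLinearMap.lsmul ℝ ℝ : ℝ →L[ℝ] E →L[ℝ] E)‖ₑ ≤ 1 := by
    simpa only [← ofReal_norm, ENNReal.ofReal_le_one] using
      ContinuousLinearMap.opNorm_lsmul_le (𝕜 := ℝ) (E := E) (R := ℝ)
  have hYoung := eLpNorm_convolution_le (ContinuousLinearMap.lsmul ℝ ℝ)
    (measurable_expKernel k).aestronglyMeasurable hf hp
  rw [eLpNorm_one_expKernel hk] at hYoung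
  refine hYoung.trans ?_
  gcongr
  exact mul_le_of_le_one_left' hL

end CausalResolvent

section AnticausalResolvent

variable {E : Type*} [NormedAddCommGroup E] [NormedSpace ℝ E] {k : ℝ} {f g : ℝ → E} {p : ℝ≥0∞}

/-- The solution operator `(∂ - k)⁻¹`, obtained from `(∂ + k)⁻¹` by reflecting the line. -/
noncomputable def anticausalResolvent (k : ℝ) (f : ℝ → E) (s : ℝ) : E :=
  -causalResolvent k (fun t => f (-t)) (-s)

theorem memLp_anticausalResolvent (hk : 0 < k) (hp : 1 ≤ p) (hf : MemLp f p) :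
    MemLp (anticausalResolvent k f) p :=
  (memLp_comp_neg (memLp_causalResolvent hk hp (memLp_comp_neg hf))).neg

theorem hasDerivAt_anticausalResolvent [CompleteSpace E] (hk : 0 < k) (hp : 1 ≤ p) (hf : MemLp f p)
    (hf_cont : Continuous f) (s : ℝ) :
    HasDerivAt (anticausalResolvent k f) (f s + k • anticausalResolvent k f s) s := by
  have h := (hasDerivAt_causalResolvent hk hp (memLp_comp_neg hf)
    (hf_cont.comp continuous_neg) (-s)).scomp s (hasDerivAt_neg s) |>.neg
  refine h.congr_deriv ?_
  simp only [anticausalResolvent, neg_neg, neg_one_smul, smul_neg, sub_eq_add_neg]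

theorem anticausalResolvent_sub (hk : 0 < k) (hp : 1 ≤ p) (hf : MemLp f p) (hg : MemLp g p) :
    anticausalResolvent k (f - g) = anticausalResolvent k f - anticausalResolvent k g := by
  ext s
  have h := congrFun (causalResolvent_sub hk hp (memLp_comp_neg hf) (memLp_comp_neg hg)) (-s)
  simp only [Pi.sub_apply, anticausalResolvent] at h ⊢
  rw [neg_sub_neg, ← neg_sub, ← h]
  rfl

theorem eLpNorm_anticausalResolvent_le (hk : 0 < k) (hp : 1 ≤ p) (hf : MemLp f p) :
    eLpNorm (anticausalResolvent k f) p ≤ ENNReal.ofReal k⁻¹ * eLpNorm f p := by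
  have hf_neg := memLp_comp_neg hf
  calc eLpNorm (anticausalResolvent k f) p volume
      = eLpNorm (fun s => causalResolvent k (fun t => f (-t)) (-s)) p volume := eLpNorm_neg _ _ _
    _ = eLpNorm (causalResolvent k fun t => f (-t)) p volume :=
        eLpNorm_comp_neg (memLp_causalResolvent hk hp hf_neg).aestronglyMeasurable
    _ ≤ ENNReal.ofReal k⁻¹ * eLpNorm (fun t => f (-t)) p volume :=
        eLpNorm_causalResolvent_le hk hp hf_neg.aestronglyMeasurable
    _ = ENNReal.ofReal k⁻¹ * eLpNorm f p volume := by rw [eLpNorm_comp_neg hf.aestronglyMeasurable]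

end AnticausalResolvent

section GreenOperator

variable {E : Type*} [NormedAddCommGroup E] [NormedSpace ℝ E] {k : ℝ} {f g : ℝ → E} {p : ℝ≥0∞}

/-- The solution operator `(∂² - k²)⁻¹`, factored as `(∂ + k)⁻¹ (∂ - k)⁻¹`. -/
noncomputable def greenOperator (k : ℝ) (f : ℝ → E) : ℝ → E :=
  causalResolvent k (anticausalResolvent k f)

theorem greenOperator_congr_ae (h : f =ᵐ[volume] g) : greenOperator k f = greenOperator k g := by
  have h_neg : (fun t => f (-t)) =ᵐ[volume] fun t => g (-t) :=
    (Measure.measurePreserving_neg volume).quasiMeasurePreserving.ae h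
  have h_anticausal : anticausalResolvent k f = anticausalResolvent k g := by
    ext s
    simp only [anticausalResolvent, causalResolvent, convolution_congr _ ae_eq_rfl h_neg]
  rw [greenOperator, h_anticausal, greenOperator]

theorem memLp_greenOperator (hk : 0 < k) (hp : 1 ≤ p) (hf : MemLp f p) :
    MemLp (greenOperator k f) p :=
  memLp_causalResolvent hk hp (memLp_anticausalResolvent hk hp hf)

theorem continuous_greenOperator (hk : 0 < k) (hp : 1 ≤ p) (hf : MemLp f p) :
    Continuous (greenOperator k f) :=
  continuous_causalResolvent hk hp (memLp_anticausalResolvent hk hp hf)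

theorem eLpNorm_greenOperator_le (hk : 0 < k) (hp : 1 ≤ p) (hf : MemLp f p) :
    eLpNorm (greenOperator k f) p ≤ ENNReal.ofReal (k ^ 2)⁻¹ * eLpNorm f p :=
  calc eLpNorm (greenOperator k f) p volume
      ≤ ENNReal.ofReal k⁻¹ * (ENNReal.ofReal k⁻¹ * eLpNorm f p volume) :=
        (eLpNorm_causalResolvent_le hk hp
          (memLp_anticausalResolvent hk hp hf).aestronglyMeasurable).trans
          (mul_le_mul' le_rfl (eLpNorm_anticausalResolvent_le hk hp hf))
    _ = ENNReal.ofReal (k ^ 2)⁻¹ * eLpNorm f p volume := by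
        rw [← mul_assoc, ← ENNReal.ofReal_mul (inv_nonneg.2 hk.le), ← mul_inv, ← sq]

theorem greenOperator_sub (hk : 0 < k) (hp : 1 ≤ p) (hf : MemLp f p) (hg : MemLp g p) :
    greenOperator k (f - g) = greenOperator k f - greenOperator k g := by
  rw [greenOperator, anticausalResolvent_sub hk hp hf hg, causalResolvent_sub hk hp
    (memLp_anticausalResolvent hk hp hf) (memLp_anticausalResolvent hk hp hg)]
  rfl

end GreenOperator

section Perturbation

variable {E : Type*} [NormedAddCommGroup E] [NormedSpace ℝ E] {k c : ℝ} {V : ℝ → ℝ}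
  {η u v : ℝ → E} {p : ℝ≥0∞}

theorem eLpNorm_greenOperator_add_smul_sub_le (hk : 0 < k) (hp : 1 ≤ p)
    (hV : AEStronglyMeasurable V) (hVc : ∀ s, |V s| ≤ c) (hη : MemLp η p) (hu : MemLp u p)
    (hv : MemLp v p) :
    eLpNorm (greenOperator k (η + V • u) - greenOperator k (η + V • v)) p ≤
      ENNReal.ofReal (c / k ^ 2) * eLpNorm (u - v) p := by
  have hVu := memLp_smul_of_norm_le hV hVc hu
  have hVv := memLp_smul_of_norm_le hV hVc hv
  have hsub : greenOperator k (η + V • u) - greenOperator k (η + V • v) =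
      greenOperator k (V • (u - v)) := by
    rw [← greenOperator_sub hk hp (hη.add hVu) (hη.add hVv), add_sub_add_left_eq_sub, smul_sub]
  rw [hsub, div_eq_inv_mul, ENNReal.ofReal_mul (by positivity), mul_assoc]
  exact (eLpNorm_greenOperator_le hk hp (memLp_smul_of_norm_le hV hVc (hu.sub hv))).trans
    (mul_le_mul' le_rfl (eLpNorm_smul_le_of_norm_le hVc))

theorem exists_eq_greenOperator_add_smul [CompleteSpace E] (hk : 0 < k) (hp : 1 ≤ p)
    (hV : AEStronglyMeasurable V) (hVc : ∀ s, |V s| ≤ c) (hck : c < k ^ 2) (hη : MemLp η p) :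
    ∃ ξ, MemLp ξ p ∧ ξ = greenOperator k (η + V • ξ) := by
  have : Fact (1 ≤ p) := ⟨hp⟩
  have hΦ (u : Lp E p (volume : Measure ℝ)) : MemLp (greenOperator k (η + V • ⇑u)) p :=
    memLp_greenOperator hk hp (hη.add (memLp_smul_of_norm_le hV hVc (Lp.memLp u)))
  have hΦ_contracting : ContractingWith (c / k ^ 2).toNNReal fun u => (hΦ u).toLp :=
    ⟨toNNReal_lt_one.2 ((div_lt_one (by positivity)).2 hck), fun u v => by
      rw [Lp.edist_toLp_toLp, Lp.edist_def]
      exact eLpNorm_greenOperator_add_smul_sub_le hk hp hV hVc hη (Lp.memLp u) (Lp.memLp v)⟩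
  obtain ⟨u, hu, -⟩ := hΦ_contracting.exists_fixedPoint 0 (edist_ne_top _ _)
  refine ⟨greenOperator k (η + V • ⇑u), hΦ u, greenOperator_congr_ae ?_⟩
  have hu_ae : u =ᵐ[volume] greenOperator k (η + V • ⇑u) := by
    conv_lhs => rw [← hu.eq]
    exact (hΦ u).coeFn_toLp
  exact hu_ae.mono fun s hs => by simp only [Pi.add_apply, Pi.smul_apply', hs]

end Perturbation

section SobolevC2

/-- The classical counterpart of membership in `W^{2,p}(ℝ)`: a `C²` function which is in `L^p`
together with its first two derivatives. -/
structure IsSobolevC2 {E : Type*} [NormedAddCommGroup E] [NormedSpace ℝ E] (p : ℝ≥0∞)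
    (ξ : ℝ → E) : Prop where
  contDiff : ContDiff ℝ 2 ξ
  memLp : MemLp ξ p
  memLp_deriv : MemLp (deriv ξ) p
  memLp_deriv_deriv : MemLp (deriv (deriv ξ)) p

variable {E : Type*} [NormedAddCommGroup E] [NormedSpace ℝ E] {p : ℝ≥0∞} {ξ ζ ξ' ξ'' : ℝ → E}

namespace IsSobolevC2

theorem hasDerivAt (h : IsSobolevC2 p ξ) (s : ℝ) : HasDerivAt ξ (deriv ξ s) s :=
  (h.contDiff.differentiable two_ne_zero s).hasDerivAt

theorem hasDerivAt_deriv (h : IsSobolevC2 p ξ) (s : ℝ) :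
    HasDerivAt (deriv ξ) (deriv (deriv ξ) s) s :=
  ((h.contDiff.iterate_deriv' 1 1).differentiable one_ne_zero s).hasDerivAt

theorem continuous_deriv_deriv (h : IsSobolevC2 p ξ) : Continuous (deriv (deriv ξ)) :=
  (h.contDiff.iterate_deriv' 0 2).continuous

theorem of_hasDerivAt (hξ : ∀ s, HasDerivAt ξ (ξ' s) s) (hξ' : ∀ s, HasDerivAt ξ' (ξ'' s) s)
    (hξ'' : Continuous ξ'') (hp : MemLp ξ p) (hp' : MemLp ξ' p) (hp'' : MemLp ξ'' p) :
    IsSobolevC2 p ξ := by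
  have hderiv : deriv ξ = ξ' := funext fun s => (hξ s).deriv
  have hderiv' : deriv ξ' = ξ'' := funext fun s => (hξ' s).deriv
  have hξ'_C1 : ContDiff ℝ 1 ξ' :=
    contDiff_one_iff_deriv.2 ⟨fun s => (hξ' s).differentiableAt, hderiv' ▸ hξ''⟩
  refine ⟨?_, hp, hderiv ▸ hp', by rwa [hderiv, hderiv']⟩
  exact (contDiff_succ_iff_deriv (n := 1)).2
    ⟨fun s => (hξ s).differentiableAt, by simp, hderiv ▸ hξ'_C1⟩

theorem sub (hξ : IsSobolevC2 p ξ) (hζ : IsSobolevC2 p ζ) : IsSobolevC2 p (ξ - ζ) :=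
  .of_hasDerivAt (fun s => (hξ.hasDerivAt s).sub (hζ.hasDerivAt s))
    (fun s => (hξ.hasDerivAt_deriv s).sub (hζ.hasDerivAt_deriv s))
    (hξ.continuous_deriv_deriv.sub hζ.continuous_deriv_deriv)
    (hξ.memLp.sub hζ.memLp) (hξ.memLp_deriv.sub hζ.memLp_deriv)
    (hξ.memLp_deriv_deriv.sub hζ.memLp_deriv_deriv)

theorem deriv_deriv_sub (hξ : IsSobolevC2 p ξ) (hζ : IsSobolevC2 p ζ) (s : ℝ) :
    deriv (deriv (ξ - ζ)) s = deriv (deriv ξ) s - deriv (deriv ζ) s := by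
  have hderiv : deriv (ξ - ζ) = deriv ξ - deriv ζ :=
    funext fun s => ((hξ.hasDerivAt s).sub (hζ.hasDerivAt s)).deriv
  rw [hderiv]
  exact ((hξ.hasDerivAt_deriv s).sub (hζ.hasDerivAt_deriv s)).deriv

end IsSobolevC2

theorem isSobolevC2_two_iff {ξ : ℝ → ℝ} :
    IsSobolevC2 2 ξ ↔ ContDiff ℝ 2 ξ ∧ (Integrable fun s => ξ s ^ 2) ∧
      (Integrable fun s => deriv ξ s ^ 2) ∧ Integrable fun s => deriv (deriv ξ) s ^ 2 := by
  have hsq {f : ℝ → ℝ} (hf : Continuous f) : MemLp f 2 ↔ Integrable fun s => f s ^ 2 :=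
    memLp_two_iff_integrable_sq hf.aestronglyMeasurable
  have hiff (h : ContDiff ℝ 2 ξ) : MemLp ξ 2 ∧ MemLp (deriv ξ) 2 ∧ MemLp (deriv (deriv ξ)) 2 ↔
      (Integrable fun s => ξ s ^ 2) ∧ (Integrable fun s => deriv ξ s ^ 2) ∧
        Integrable fun s => deriv (deriv ξ) s ^ 2 :=
    and_congr (hsq h.continuous) <| and_congr (hsq (h.iterate_deriv' 1 1).continuous)
      (hsq (h.iterate_deriv' 0 2).continuous)
  rw [← and_congr_right hiff]
  exact ⟨fun ⟨h, h₀, h₁, h₂⟩ => ⟨h, h₀, h₁, h₂⟩, fun ⟨h, h₀, h₁, h₂⟩ => ⟨h, h₀, h₁, h₂⟩⟩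

end SobolevC2

section Existence

variable {E : Type*} [NormedAddCommGroup E] [NormedSpace ℝ E] [CompleteSpace E] {k : ℝ}
  {p : ℝ≥0∞} {f : ℝ → E}

theorem hasDerivAt_greenOperator (hk : 0 < k) (hp : 1 ≤ p) (hf : MemLp f p) (hf_cont : Continuous f)
    (s : ℝ) :
    HasDerivAt (greenOperator k f) (anticausalResolvent k f s - k • greenOperator k f s) s :=
  hasDerivAt_causalResolvent hk hp (memLp_anticausalResolvent hk hp hf)
    (continuous_iff_continuousAt.2 fun s =>
      (hasDerivAt_anticausalResolvent hk hp hf hf_cont s).continuousAt) s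

theorem hasDerivAt_deriv_greenOperator (hk : 0 < k) (hp : 1 ≤ p) (hf : MemLp f p)
    (hf_cont : Continuous f) (s : ℝ) :
    HasDerivAt (deriv (greenOperator k f)) (f s + k ^ 2 • greenOperator k f s) s := by
  rw [funext fun s => (hasDerivAt_greenOperator hk hp hf hf_cont s).deriv]
  refine ((hasDerivAt_anticausalResolvent hk hp hf hf_cont s).sub
    ((hasDerivAt_greenOperator hk hp hf hf_cont s).const_smul k)).congr_deriv ?_
  module

theorem isSobolevC2_greenOperator (hk : 0 < k) (hp : 1 ≤ p) (hf : MemLp f p)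
    (hf_cont : Continuous f) : IsSobolevC2 p (greenOperator k f) := by
  have hG := memLp_greenOperator hk hp hf
  refine .of_hasDerivAt (fun s => hasDerivAt_greenOperator hk hp hf hf_cont s) (fun s => ?_)
    (hf_cont.add ((continuous_greenOperator hk hp hf).const_smul (k ^ 2))) hG
    ((memLp_anticausalResolvent hk hp hf).sub (hG.const_smul k)) (hf.add (hG.const_smul (k ^ 2)))
  rw [← funext fun s => (hasDerivAt_greenOperator hk hp hf hf_cont s).deriv]
  exact hasDerivAt_deriv_greenOperator hk hp hf hf_cont s

theorem exists_isSobolevC2_deriv_deriv_sub_smul_eq {c : ℝ} {q : ℝ → ℝ} {η : ℝ → E} (hk : 0 < k)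
    (hp : 1 ≤ p) (hq : Continuous q) (hqc : ∀ s, |q s - k ^ 2| ≤ c) (hck : c < k ^ 2)
    (hη : MemLp η p) (hη_cont : Continuous η) :
    ∃ ξ, IsSobolevC2 p ξ ∧ ∀ s, deriv (deriv ξ) s - q s • ξ s = η s := by
  have hV : Continuous fun s => q s - k ^ 2 := by fun_prop
  obtain ⟨ξ, hξ, hξ_eq⟩ :=
    exists_eq_greenOperator_add_smul hk hp hV.aestronglyMeasurable hqc hck hη
  set f : ℝ → E := η + (fun s => q s - k ^ 2) • ξ with hf_def
  have hf : MemLp f p := hη.add (memLp_smul_of_norm_le hV.aestronglyMeasurable hqc hξ)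
  have hξ_cont : Continuous ξ := hξ_eq ▸ continuous_greenOperator hk hp hf
  have hf_cont : Continuous f := hη_cont.add (hV.smul hξ_cont)
  refine ⟨ξ, hξ_eq ▸ isSobolevC2_greenOperator hk hp hf hf_cont, fun s => ?_⟩
  have hξ'' := (hasDerivAt_deriv_greenOperator hk hp hf hf_cont s).deriv
  rw [← hξ_eq] at hξ''
  rw [hξ'', hf_def, Pi.add_apply, Pi.smul_apply', sub_smul]
  abel

end Existence

section Uniqueness

variable {E : Type*} [NormedAddCommGroup E] [InnerProductSpace ℝ E]

theorem integrable_inner_of_memLp_two {α : Type*} [MeasurableSpace α] {μ : Measure α} {f g : α → E}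
    (hf : MemLp f 2 μ) (hg : MemLp g 2 μ) : Integrable (fun a => inner ℝ (f a) (g a)) μ :=
  memLp_one_iff_integrable.1 <| hf.of_bilin (fun x y => inner ℝ x y) 1 hg
    (hf.aestronglyMeasurable.inner hg.aestronglyMeasurable) <| ae_of_all _ fun a => by
      simpa only [one_mul] using nnnorm_inner_le_nnnorm (𝕜 := ℝ) _ _

theorem IsSobolevC2.integral_inner_deriv_deriv {w : ℝ → E} (hw : IsSobolevC2 2 w) :
    ∫ s, inner ℝ (w s) (deriv (deriv w) s) = -∫ s, ‖deriv w s‖ ^ 2 := by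
  simp only [← real_inner_self_eq_norm_sq]
  exact integral_bilinear_hasDerivAt_right_eq_neg_left_of_integrable (L := innerSL ℝ)
    (fun s _ => hw.hasDerivAt s) (fun s _ => hw.hasDerivAt_deriv s)
    (integrable_inner_of_memLp_two hw.memLp hw.memLp_deriv_deriv)
    (integrable_inner_of_memLp_two hw.memLp_deriv hw.memLp_deriv)
    (integrable_inner_of_memLp_two hw.memLp hw.memLp_deriv)

theorem IsSobolevC2.eq_zero_of_deriv_deriv_eq_smul {q : ℝ → ℝ} {w : ℝ → E}
    (hw : IsSobolevC2 2 w) (hq : ∀ s, 0 < q s)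
    (hw_eq : ∀ s, deriv (deriv w) s = q s • w s) : w = 0 := by
  have henergy (s : ℝ) : inner ℝ (w s) (deriv (deriv w) s) = q s * ‖w s‖ ^ 2 := by
    rw [hw_eq, real_inner_smul_right, real_inner_self_eq_norm_sq]
  have hnonneg (s : ℝ) : 0 ≤ inner ℝ (w s) (deriv (deriv w) s) :=
    (henergy s).symm ▸ mul_nonneg (hq s).le (sq_nonneg _)
  have hintegral : ∫ s, inner ℝ (w s) (deriv (deriv w) s) = 0 :=
    le_antisymm (hw.integral_inner_deriv_deriv.trans_le
      (neg_nonpos.2 (integral_nonneg fun s => by positivity))) (integral_nonneg hnonneg)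
  have hae := (integral_eq_zero_iff_of_nonneg hnonneg
    (integrable_inner_of_memLp_two hw.memLp hw.memLp_deriv_deriv)).1 hintegral
  have hzero := ((hw.contDiff.continuous.inner hw.continuous_deriv_deriv).ae_eq_iff_eq volume
    continuous_const).1 hae
  ext s
  have hs : q s * ‖w s‖ ^ 2 = 0 := (henergy s).symm.trans (congrFun hzero s)
  simpa [(hq s).ne'] using hs

end Uniqueness

theorem exists_forall_norm_le_of_tendsto_cocompact {X E : Type*} [TopologicalSpace X]
    [NormedAddCommGroup E] {f : X → E} (hf : Continuous f)
    (hf_zero : Tendsto f (cocompact X) (nhds 0)) : ∃ C, ∀ x, ‖f x‖ ≤ C :=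
  let g : ZeroAtInftyContinuousMap X E := ⟨⟨f, hf⟩, hf_zero⟩
  ⟨‖g.toBCF‖, g.toBCF.norm_coe_le_norm⟩

theorem linearized_operator_bijective_general {E : Type*} [NormedAddCommGroup E]
    [InnerProductSpace ℝ E] [CompleteSpace E] {q : ℝ → ℝ} {m M : ℝ} (hq : Continuous q)
    (hm : 0 < m) (hmq : ∀ s, m ≤ q s) (hqM : ∀ s, q s ≤ M) {η : ℝ → E} (hη_cont : Continuous η)
    (hη : MemLp η 2) :
    ∃! ξ : ℝ → E, IsSobolevC2 2 ξ ∧ ∀ s, deriv (deriv ξ) s - q s • ξ s = η s := by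
  have hM : 0 < M := hm.trans_le ((hmq 0).trans (hqM 0))
  have hsqrt : √M ^ 2 = M := sq_sqrt hM.le
  obtain ⟨ξ, hξ, hξ_eq⟩ := exists_isSobolevC2_deriv_deriv_sub_smul_eq (k := √M) (c := M - m)
    (sqrt_pos.2 hM) one_le_two hq
    (fun s => by rw [hsqrt, abs_sub_comm, abs_of_nonneg (sub_nonneg.2 (hqM s))]; linarith [hmq s])
    (by rw [hsqrt]; linarith) hη hη_cont
  refine ⟨ξ, ⟨hξ, hξ_eq⟩, fun ζ ⟨hζ, hζ_eq⟩ => sub_eq_zero.1 ?_⟩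
  refine (hζ.sub hξ).eq_zero_of_deriv_deriv_eq_smul (fun s => hm.trans_le (hmq s)) fun s => ?_
  rw [hζ.deriv_deriv_sub hξ, Pi.sub_apply, smul_sub, ← sub_eq_zero, sub_sub_sub_comm, hζ_eq,
    hξ_eq, sub_self]

/-- Bijectivity of the linearized operator `D_ρ : ξ ↦ ξ'' - e^{-ρ} ξ` for a continuous
`ρ` decaying to `0` at both infinities: for every continuous square-integrable `η` there
is a unique twice continuously differentiable `ξ` with `ξ`, `ξ'`, `ξ''` square-integrable
such that `ξ'' - e^{-ρ} ξ = η`. -/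
theorem linearized_operator_bijective
    (ρ : ℝ → ℝ) (hρ_cont : Continuous ρ)
    (hρ_top : Tendsto ρ atTop (nhds 0)) (hρ_bot : Tendsto ρ atBot (nhds 0))
    (η : ℝ → ℝ) (hη_cont : Continuous η)
    (hη_L2 : Integrable fun s => (η s) ^ 2) :
    ∃! ξ : ℝ → ℝ, ContDiff ℝ 2 ξ ∧
      (Integrable fun s => (ξ s) ^ 2) ∧
      (Integrable fun s => (deriv ξ s) ^ 2) ∧
      (Integrable fun s => (deriv (deriv ξ) s) ^ 2) ∧
      ∀ s : ℝ, deriv (deriv ξ) s - Real.exp (-ρ s) * ξ s = η s := by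
  obtain ⟨C, hC⟩ := exists_forall_norm_le_of_tendsto_cocompact hρ_cont
    (cocompact_eq_atBot_atTop (α := ℝ) ▸ hρ_bot.sup hρ_top)
  simpa only [isSobolevC2_two_iff, smul_eq_mul, and_assoc] using
    linearized_operator_bijective_general (q := fun s => exp (-ρ s)) (by fun_prop) (exp_pos (-C))
      (fun s => exp_le_exp.2 (neg_le_neg (abs_le.1 (hC s)).2))
      (fun s => exp_le_exp.2 (neg_le.1 (abs_le.1 (hC s)).1)) hη_cont
      ((memLp_two_iff_integrable_sq hη_cont.aestronglyMeasurable).2 hη_L2)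
end

section
/- Let g : ℝ → ℝ be a continuous function with g(s) > 0 for all s ∈ ℝ, and let χ : ℝ → ℝ be twice continuously differentiable with χ(s) → 0 as s → ±∞ and χ''(s) = (e^{χ(s)} − 1)·g(s) for all s ∈ ℝ. Then χ is identically zero. -/
open Filter

/-!
If `χ'' = (e^χ - 1) g` with `g ≥ 0`, then `χ χ'' ≥ 0`, because `e^χ - 1` has the sign of `χ`. Hence
`(χ²)'' = 2 χ'² + 2 χ χ'' ≥ 0`, so `χ²` is convex on the line; a convex function that tends to `0`
at both ends is nonpositive, and therefore `χ² = 0`.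
-/

open scoped RealInnerProductSpace

theorem quasiconvexOn_univ_le_max_of_tendsto {𝕜 β : Type*} [Field 𝕜] [LinearOrder 𝕜]
    [IsStrictOrderedRing 𝕜] [LinearOrder β] [TopologicalSpace β] [OrderClosedTopology β]
    {f : 𝕜 → β} {a b : β} (hf : QuasiconvexOn 𝕜 Set.univ f)
    (hbot : Tendsto f atBot (nhds a)) (htop : Tendsto f atTop (nhds b)) (x : 𝕜) :
    f x ≤ max a b := by
  have hlim : Tendsto (fun p : 𝕜 × 𝕜 => max (f p.1) (f p.2)) (atBot ×ˢ atTop) (nhds (max a b)) :=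
    (hbot.comp tendsto_fst).max (htop.comp tendsto_snd)
  refine ge_of_tendsto hlim ?_
  filter_upwards [prod_mem_prod (Iic_mem_atBot x) (Ici_mem_atTop x)] with ⟨y, z⟩ ⟨hyx, hxz⟩
  have hsublevel : Set.OrdConnected {w ∈ Set.univ | f w ≤ max (f y) (f z)} := (hf _).ordConnected
  exact (hsublevel.out ⟨trivial, le_max_left _ _⟩ ⟨trivial, le_max_right _ _⟩ ⟨hyx, hxz⟩).2

section InnerProductSpace

variable {E : Type*} [NormedAddCommGroup E] [InnerProductSpace ℝ E] {f f' f'' : ℝ → E}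

theorem convexOn_norm_sq_of_inner_hasDerivWithinAt2_nonneg {D : Set ℝ} (hD : Convex ℝ D)
    (hf : ContinuousOn f D)
    (hf' : ∀ x ∈ interior D, HasDerivWithinAt f (f' x) (interior D) x)
    (hf'' : ∀ x ∈ interior D, HasDerivWithinAt f' (f'' x) (interior D) x)
    (hinner : ∀ x ∈ interior D, 0 ≤ ⟪f x, f'' x⟫) :
    ConvexOn ℝ D fun x => ‖f x‖ ^ 2 := by
  refine convexOn_of_hasDerivWithinAt2_nonneg hD (hf.norm.pow 2)
    (fun x hx => (hf' x hx).norm_sq)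
    (fun x hx => ((hf' x hx).inner ℝ (hf'' x hx)).const_mul 2) fun x hx => ?_
  exact mul_nonneg zero_le_two (add_nonneg (hinner x hx) real_inner_self_nonneg)

theorem eq_zero_of_tendsto_zero_of_inner_hasDerivAt2_nonneg
    (hf' : ∀ x, HasDerivAt f (f' x) x) (hf'' : ∀ x, HasDerivAt f' (f'' x) x)
    (hinner : ∀ x, 0 ≤ ⟪f x, f'' x⟫)
    (hbot : Tendsto f atBot (nhds 0)) (htop : Tendsto f atTop (nhds 0)) (x : ℝ) : f x = 0 := by
  have hconvex : ConvexOn ℝ Set.univ fun x => ‖f x‖ ^ 2 :=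
    convexOn_norm_sq_of_inner_hasDerivWithinAt2_nonneg convex_univ
      (fun x _ => (hf' x).continuousAt.continuousWithinAt)
      (fun x _ => (hf' x).hasDerivWithinAt) (fun x _ => (hf'' x).hasDerivWithinAt)
      fun x _ => hinner x
  have hnonpos : ‖f x‖ ^ 2 ≤ 0 := by
    simpa using quasiconvexOn_univ_le_max_of_tendsto hconvex.quasiconvexOn
      (hbot.norm.pow 2) (htop.norm.pow 2) x
  simpa using hnonpos.antisymm (sq_nonneg ‖f x‖)

end InnerProductSpace

theorem mul_exp_sub_one_nonneg (x : ℝ) : 0 ≤ x * (Real.exp x - 1) := by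
  rcases le_total 0 x with hx | hx
  · exact mul_nonneg hx (sub_nonneg.2 (Real.one_le_exp hx))
  · exact mul_nonneg_of_nonpos_of_nonpos hx (sub_nonpos.2 (Real.exp_le_one_iff.2 hx))

theorem maximum_principle_exp_ode_general {g χ : ℝ → ℝ} (hg : ∀ s, 0 ≤ g s)
    (hχ : Differentiable ℝ χ) (hχ' : Differentiable ℝ (deriv χ))
    (hχ_top : Tendsto χ atTop (nhds 0)) (hχ_bot : Tendsto χ atBot (nhds 0))
    (hode : ∀ s, deriv (deriv χ) s = (Real.exp (χ s) - 1) * g s) (s : ℝ) : χ s = 0 := by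
  have hinner (s : ℝ) : 0 ≤ ⟪χ s, deriv (deriv χ) s⟫ := by
    calc
      0 ≤ χ s * (Real.exp (χ s) - 1) * g s := mul_nonneg (mul_exp_sub_one_nonneg _) (hg s)
      _ = ⟪χ s, deriv (deriv χ) s⟫ := by rw [Real.inner_apply, hode, mul_assoc]
  exact eq_zero_of_tendsto_zero_of_inner_hasDerivAt2_nonneg (fun x => (hχ x).hasDerivAt)
    (fun x => (hχ' x).hasDerivAt) hinner hχ_bot hχ_top s

/-- Maximum-principle type statement: if `g` is continuous and everywhere positive and
`χ` is twice continuously differentiable with `χ → 0` at `±∞` and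
`χ'' = (e^χ - 1) g`, then `χ` vanishes identically. -/
theorem maximum_principle_exp_ode
    (g : ℝ → ℝ) (hg_cont : Continuous g) (hg_pos : ∀ s : ℝ, 0 < g s)
    (χ : ℝ → ℝ) (hχ : ContDiff ℝ 2 χ)
    (hχ_top : Tendsto χ atTop (nhds 0)) (hχ_bot : Tendsto χ atBot (nhds 0))
    (hode : ∀ s : ℝ, deriv (deriv χ) s = (Real.exp (χ s) - 1) * g s) :
    ∀ s : ℝ, χ s = 0 :=
  maximum_principle_exp_ode_general (fun s => (hg_pos s).le) (hχ.differentiable two_ne_zero)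
    hχ.differentiable_deriv_two hχ_top hχ_bot hode
end
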